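/- arXiv:2310.14742 — 2 statements merged into one kernel-verified Lean document; each statement's English description precedes it below -/
import Mathlib

section
/- Let d ≥ 3 and let D ⊂ ℝ^d be a bounded strongly minimally convex domain. Then there exist ε ∈ (0,1) and A ≥ 1 such that for all x ∈ N_ε(∂D) ∩ D and all v ∈ ℝ^d: A^{-1}(‖v_N‖/(2δ_D(x)) + ‖v_T‖/δ_D(x)^{1/2}) ≤ g_D(x,v) ≤ A(‖v_N‖/(2δ_D(x)) + ‖v_T‖/δ_D(x)^{1/2}). -/
/-!
By compactness there is an `R > 0` such that at every boundary point `p` of `D` two balls of radius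
`R`, tangent to each other at `p`, lie inside and outside `D`; their common normal is the outer unit
normal `n`. Let `p` be a boundary point nearest to `x ∈ D` and `δ = dist x p`, so `x = p - δ • n`.

Upper bound. As `3 ≤ d`, there is `w` orthogonal to `v` and `n` with `‖w‖ = ‖v‖`. The affine disc
`x + s • v + t • w` is conformal harmonic and moves in the direction `n` by at most `‖v_N‖`, and
by at most `‖v‖` in total. It stays in the inner ball if `‖v_N‖` is small compared with `δ` and
`‖v_T‖` with `√δ`.

Lower bound. For a conformal harmonic `f`, the Laplacian of `u ∘ f` is the trace of the Hessian of
`u` on the tangent plane of `f`. Hence, for some uniform `κ > 0`, the function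
`u ∘ f - κ / 2 * ‖f - x‖ ^ 2` is subharmonic on a disc of uniform radius about `0`, which `f` maps
close to `p` by the Borel–Carathéodory inequality. The maximum principle applies after adding a
harmonic function which on the boundary circle is a multiple of
* `re z * ⟪f_x(0), f z - x⟫`, to be absorbed by the negative square, or
* `(s ± re z) * ⟪n, f z - x⟫`, where `s ± re z ≥ 0` on `‖z‖ = s`, and `⟪n, f - x⟫` is at most
  `δ + ‖f - x‖ ^ 2 / (2 * R)` because `f` avoids the outer ball.

As `-u x = O(δ)`, the first choice gives `‖f_x(0)‖ = O(√δ)` and the second `⟪n, f_x(0)⟫ = O(δ)`.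
-/

open scoped RealInnerProductSpace ENNReal
open Metric Set Filter

noncomputable section

/-- Euclidean space `ℝ^d`. -/
abbrev Euc (d : ℕ) := EuclideanSpace ℝ (Fin d)

/-- The open unit disk in `ℝ²`. -/
def unitDisk : Set (Euc 2) := Metric.ball 0 1

/-- Partial derivative of `f` at `z` in the `i`-th coordinate direction. -/
def pd {d : ℕ} (i : Fin 2) (f : Euc 2 → Euc d) (z : Euc 2) : Euc d :=
  fderiv ℝ f z (EuclideanSpace.single i 1)

/-- `f` is a conformal harmonic map on the unit disk: it is `C²`, its (vector)
Laplacian vanishes (equivalently, every component is harmonic), and at each point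
its two partial derivatives are orthogonal and of equal norm. -/
def ConformalHarmonicOnDisk {d : ℕ} (f : Euc 2 → Euc d) : Prop :=
  ContDiffOn ℝ 2 f unitDisk ∧
  (∀ z ∈ unitDisk,
    fderiv ℝ (pd 0 f) z (EuclideanSpace.single 0 1)
      + fderiv ℝ (pd 1 f) z (EuclideanSpace.single 1 1) = 0) ∧
  (∀ z ∈ unitDisk, ‖pd 0 f z‖ = ‖pd 1 f z‖ ∧ ⟪pd 0 f z, pd 1 f z⟫ = 0)

/-- The minimal (Forstnerič–Kalaj) metric of a domain `D ⊆ ℝ^d`: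
`g_D(x,v) = inf {1/r : r > 0, f ∈ CH(𝔻, D), f 0 = x, f_x 0 = r • v}`. -/
def minMetric {d : ℕ} (D : Set (Euc d)) (x v : Euc d) : ℝ :=
  sInf {c : ℝ | ∃ r : ℝ, 0 < r ∧ c = 1 / r ∧
    ∃ f : Euc 2 → Euc d, ConformalHarmonicOnDisk f ∧ (∀ z ∈ unitDisk, f z ∈ D) ∧
      f 0 = x ∧ pd 0 f 0 = r • v}

/-- `γ` is a piecewise `C¹` curve on `[a, b]`. -/
def PiecewiseC1On {d : ℕ} (γ : ℝ → Euc d) (a b : ℝ) : Prop :=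
  ContinuousOn γ (Set.Icc a b) ∧
  ∃ (n : ℕ) (t : Fin (n + 2) → ℝ), Monotone t ∧ t 0 = a ∧ t (Fin.last (n + 1)) = b ∧
    ∀ i : Fin (n + 1), ContDiffOn ℝ 1 γ (Set.Icc (t i.castSucc) (t i.succ))

/-- The minimal pseudodistance `ρ_D`: infimum of minimal lengths of piecewise `C¹`
curves in `D` joining `x` to `y`. -/
def minDist {d : ℕ} (D : Set (Euc d)) (x y : Euc d) : ℝ :=
  sInf {L : ℝ | ∃ γ : ℝ → Euc d, PiecewiseC1On γ 0 1 ∧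
    (∀ t ∈ Set.Icc (0:ℝ) 1, γ t ∈ D) ∧ γ 0 = x ∧ γ 1 = y ∧
    L = ∫ t in (0:ℝ)..(1:ℝ), minMetric D (γ t) (deriv γ t)}

/-- The Gromov product `(x|y)_o` with respect to the minimal pseudodistance of `D`. -/
def gromovProd {d : ℕ} (D : Set (Euc d)) (o x y : Euc d) : ℝ :=
  (minDist D x o + minDist D y o - minDist D x y) / 2

/-- `D` is hyperbolic: the minimal pseudodistance is a genuine distance. -/
def MinHyperbolic {d : ℕ} (D : Set (Euc d)) : Prop :=
  ∀ x ∈ D, ∀ y ∈ D, x ≠ y → 0 < minDist D x y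

/-- The Hessian quadratic form of `u` at `x` in direction `v`. -/
def hessQ {d : ℕ} (u : Euc d → ℝ) (x v : Euc d) : ℝ :=
  fderiv ℝ (fun y => fderiv ℝ u y v) x v

/-- `D` is a bounded domain with `C²` boundary, described by a `C²` defining
function `u` on a neighborhood `U` of `∂D` with nonvanishing differential. -/
def IsC2BoundedDomain {d : ℕ} (D : Set (Euc d)) : Prop :=
  IsOpen D ∧ IsConnected D ∧ Bornology.IsBounded D ∧
  ∃ (U : Set (Euc d)) (u : Euc d → ℝ), IsOpen U ∧ frontier D ⊆ U ∧ ContDiffOn ℝ 2 u U ∧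
    D ∩ U = {x | x ∈ U ∧ u x < 0} ∧ frontier D = {x | x ∈ U ∧ u x = 0} ∧
    ∀ x ∈ frontier D, fderiv ℝ u x ≠ 0

/-- `D` is a bounded strongly minimally convex domain: it has a `C²` defining function
which is strongly minimally plurisubharmonic near `∂D`, i.e. the trace of its Hessian
on every 2-plane (spanned by an orthonormal pair `v, w`) is strictly positive. -/
def IsStronglyMinimallyConvex {d : ℕ} (D : Set (Euc d)) : Prop :=
  IsOpen D ∧ IsConnected D ∧ Bornology.IsBounded D ∧
  ∃ (U : Set (Euc d)) (u : Euc d → ℝ), IsOpen U ∧ frontier D ⊆ U ∧ ContDiffOn ℝ 2 u U ∧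
    D ∩ U = {x | x ∈ U ∧ u x < 0} ∧ frontier D = {x | x ∈ U ∧ u x = 0} ∧
    (∀ x ∈ frontier D, fderiv ℝ u x ≠ 0) ∧
    (∀ x ∈ U, ∀ v w : Euc d, ‖v‖ = 1 → ‖w‖ = 1 → ⟪v, w⟫ = 0 →
      0 < hessQ u x v + hessQ u x w)

/-- `D` is a bounded strongly convex domain: convex, with a `C²` defining function whose
Hessian is positive definite on the tangent space at every boundary point
(equivalently, all principal curvatures of `∂D` w.r.t. the inner normal are positive). -/
def IsStronglyConvexDomain {d : ℕ} (D : Set (Euc d)) : Prop :=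
  IsOpen D ∧ IsConnected D ∧ Bornology.IsBounded D ∧ Convex ℝ D ∧
  ∃ (U : Set (Euc d)) (u : Euc d → ℝ), IsOpen U ∧ frontier D ⊆ U ∧ ContDiffOn ℝ 2 u U ∧
    D ∩ U = {x | x ∈ U ∧ u x < 0} ∧ frontier D = {x | x ∈ U ∧ u x = 0} ∧
    (∀ x ∈ frontier D, fderiv ℝ u x ≠ 0) ∧
    (∀ ξ ∈ frontier D, ∀ w : Euc d, w ≠ 0 → fderiv ℝ u ξ w = 0 → 0 < hessQ u ξ w)

/-- For `x ∈ D` with nearest boundary point `p`, the outer unit normal direction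
`n_{π(x)} = (p - x)/‖p - x‖`. -/
def nvec {d : ℕ} (x p : Euc d) : Euc d := ‖p - x‖⁻¹ • (p - x)

/-- Normal component of `v` at `x` with nearest boundary point `p`. -/
def vN {d : ℕ} (x p v : Euc d) : Euc d := ⟪v, nvec x p⟫ • nvec x p

/-- Tangential component of `v` at `x` with nearest boundary point `p`. -/
def vT {d : ℕ} (x p v : Euc d) : Euc d := v - vN x p v

/-- The intrinsic distance `H` on the boundary `∂D`: infimum of Euclidean lengths of
piecewise `C¹` curves in `∂D` joining two boundary points. -/
def bdist {d : ℕ} (D : Set (Euc d)) (ξ η : Euc d) : ℝ :=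
  sInf {L : ℝ | ∃ α : ℝ → Euc d, PiecewiseC1On α 0 1 ∧
    (∀ t ∈ Set.Icc (0:ℝ) 1, α t ∈ frontier D) ∧ α 0 = ξ ∧ α 1 = η ∧
    L = ∫ t in (0:ℝ)..(1:ℝ), ‖deriv α t‖}

/-- `h(x) = δ_D(x)^{1/2}`. -/
def hfun {d : ℕ} (D : Set (Euc d)) (x : Euc d) : ℝ :=
  Real.sqrt (Metric.infDist x (frontier D))

/-- The length of a curve with respect to the boundary Finsler metric
`F(x,v) = ‖v_N‖/(2 δ_D(x)) + ‖v_T‖/δ_D(x)^{1/2}`. -/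
def Flen {d : ℕ} (D : Set (Euc d)) (π : Euc d → Euc d) (γ : ℝ → Euc d) : ℝ :=
  ∫ t in (0:ℝ)..(1:ℝ),
    (‖vN (γ t) (π (γ t)) (deriv γ t)‖ / (2 * Metric.infDist (γ t) (frontier D))
      + ‖vT (γ t) (π (γ t)) (deriv γ t)‖ / Real.sqrt (Metric.infDist (γ t) (frontier D)))

/-- The filling Finsler metric `F`: the boundary Finsler metric on
`N = {δ_D ≤ ε}` and `c‖v‖` elsewhere. -/
def Fmet {d : ℕ} (D : Set (Euc d)) (π : Euc d → Euc d) (ε c : ℝ) (x v : Euc d) : ℝ :=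
  if Metric.infDist x (frontier D) ≤ ε then
    ‖vN x (π x) v‖ / (2 * Metric.infDist x (frontier D))
      + ‖vT x (π x) v‖ / Real.sqrt (Metric.infDist x (frontier D))
  else c * ‖v‖

/-- The intrinsic distance `d_F` associated to the filling Finsler metric `F`. -/
def dF {d : ℕ} (D : Set (Euc d)) (π : Euc d → Euc d) (ε c : ℝ) (x y : Euc d) : ℝ :=
  sInf {L : ℝ | ∃ γ : ℝ → Euc d, PiecewiseC1On γ 0 1 ∧
    (∀ t ∈ Set.Icc (0:ℝ) 1, γ t ∈ D) ∧ γ 0 = x ∧ γ 1 = y ∧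
    L = ∫ t in (0:ℝ)..(1:ℝ), Fmet D π ε c (γ t) (deriv γ t)}

/-- The hyperbolic filling distance
`d_H(x,y) = 2 log((H(π x, π y) + h(x) ∨ h(y)) / √(h(x) h(y)))`. -/
def dH {d : ℕ} (D : Set (Euc d)) (π : Euc d → Euc d) (x y : Euc d) : ℝ :=
  2 * Real.log ((bdist D (π x) (π y) + max (hfun D x) (hfun D y)) /
    Real.sqrt (hfun D x * hfun D y))

/-- `δ̂_D(x,v)`: the supremum over 2-dimensional linear subspaces `Λ ∋ v` of the
distance (in `ℝ≥0∞`, so `∞` if `x + Λ ⊆ D`) from `x` to `(x + Λ) \ D`. -/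
def deltaHat {d : ℕ} (D : Set (Euc d)) (x v : Euc d) : ℝ≥0∞ :=
  ⨆ (Λ : Submodule ℝ (Euc d)) (_ : Module.finrank ℝ Λ = 2) (_ : v ∈ Λ),
    ⨅ (y : Euc d) (_ : y - x ∈ Λ ∧ y ∉ D), edist x y

/-- The positive parameter at which the ray `t ↦ x + t • v` exits the convex domain `D`
(equal to `0`, by the `sInf ∅ = 0` convention, when the ray stays in `D`,
i.e. when the corresponding chord endpoint is the point at infinity). -/
def chordParam {d : ℕ} (D : Set (Euc d)) (x v : Euc d) : ℝ :=
  sInf {s : ℝ | 0 < s ∧ x + s • v ∉ D}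

/-- The Hilbert Finsler metric `h_D(x,v) = (‖v‖/2)(1/‖x-a‖ + 1/‖x-b‖)` of a convex
domain, with the convention `1/‖x-∞‖ = 0` (here `‖x-b‖ = chordParam D x v • ‖v‖` and
`‖x-a‖ = chordParam D x (-v) • ‖v‖`, and division by zero is zero). -/
def hilbertFinsler {d : ℕ} (D : Set (Euc d)) (x v : Euc d) : ℝ :=
  (1/2) * (1 / chordParam D x v + 1 / chordParam D x (-v))

/- The Hilbert distance of a convex domain: for `x ≠ y`,
`H_D(x,y) = ½ log((‖x-b‖ ‖y-a‖)/(‖x-a‖ ‖y-b‖))` where `a, x, y, b` are aligned on the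
chord through `x, y`, with the convention that ratios involving the point at infinity
(detected by `chordParam = 0`) are equal to `1`. -/
open Classical in
def hilbertDist {d : ℕ} (D : Set (Euc d)) (x y : Euc d) : ℝ :=
  if x = y then 0 else
    (1/2) * Real.log
      ((if chordParam D x (y - x) = 0 then 1
        else chordParam D x (y - x) / (chordParam D x (y - x) - 1)) *
       (if chordParam D x (x - y) = 0 then 1
        else (1 + chordParam D x (x - y)) / chordParam D x (x - y)))

namespace MinimalMetric

open InnerProductSpace Laplacian
open scoped Topology NNReal

/-! ### Second derivatives -/

section SecondDerivatives

variable {E F G : Type*} [NormedAddCommGroup E] [NormedSpace ℝ E]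
  [NormedAddCommGroup F] [NormedSpace ℝ F] [NormedAddCommGroup G] [NormedSpace ℝ G]

theorem differentiableAt_fderiv_of_contDiffAt_two {f : E → F} {x : E} (hf : ContDiffAt ℝ 2 f x) :
    DifferentiableAt ℝ (fderiv ℝ f) x :=
  (hf.fderiv_right (m := 1) (by norm_num)).differentiableAt one_ne_zero

theorem eventually_differentiableAt_of_contDiffAt_two {f : E → F} {x : E}
    (hf : ContDiffAt ℝ 2 f x) : ∀ᶠ y in 𝓝 x, DifferentiableAt ℝ f y :=
  (hf.eventually (by simp)).mono fun _ hy => hy.differentiableAt two_ne_zero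

theorem fderiv_fderiv_const_apply {f : E → F} {x : E} (hf : ContDiffAt ℝ 2 f x) (v w : E) :
    fderiv ℝ (fun y => fderiv ℝ f y v) x w = fderiv ℝ (fderiv ℝ f) x w v := by
  rw [((differentiableAt_fderiv_of_contDiffAt_two hf).hasFDerivAt.clm_apply
    (hasFDerivAt_const v x)).fderiv]
  simp

theorem fderiv_fderiv_comp_apply {g : F → G} {f : E → F} {x : E} (hg : ContDiffAt ℝ 2 g (f x))
    (hf : ContDiffAt ℝ 2 f x) (v w : E) :
    fderiv ℝ (fderiv ℝ (g ∘ f)) x v w =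
      fderiv ℝ (fderiv ℝ g) (f x) (fderiv ℝ f x v) (fderiv ℝ f x w) +
        fderiv ℝ g (f x) (fderiv ℝ (fderiv ℝ f) x v w) := by
  have hchain : fderiv ℝ (g ∘ f) =ᶠ[𝓝 x] fun y => (fderiv ℝ g (f y)).comp (fderiv ℝ f y) := by
    filter_upwards [eventually_differentiableAt_of_contDiffAt_two hf,
      hf.continuousAt.eventually (eventually_differentiableAt_of_contDiffAt_two hg)]
      with y hfy hgy using fderiv_comp y hgy hfy
  have hderiv : HasFDerivAt (fun y => (fderiv ℝ g (f y)).comp (fderiv ℝ f y)) _ x :=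
    ((differentiableAt_fderiv_of_contDiffAt_two hg).hasFDerivAt.comp x
      (hf.differentiableAt two_ne_zero).hasFDerivAt).clm_comp
      (differentiableAt_fderiv_of_contDiffAt_two hf).hasFDerivAt
  rw [hchain.fderiv_eq, hderiv.fderiv]
  simp [add_comm]

theorem deriv_deriv_comp_line {f : E → F} {x : E} (hf : ContDiffAt ℝ 2 f x) (v : E) :
    deriv (deriv fun t : ℝ => f (x + t • v)) 0 = fderiv ℝ (fderiv ℝ f) x v v := by
  have hline (t : ℝ) : HasDerivAt (fun t : ℝ => x + t • v) v t := by
    simpa using ((hasDerivAt_id t).smul_const v).const_add x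
  have htendsto : Tendsto (fun t : ℝ => x + t • v) (𝓝 0) (𝓝 x) := by
    simpa using (hline 0).continuousAt.tendsto
  have hderiv : (deriv fun t : ℝ => f (x + t • v)) =ᶠ[𝓝 0] fun t => fderiv ℝ f (x + t • v) v := by
    filter_upwards [htendsto.eventually (eventually_differentiableAt_of_contDiffAt_two hf)]
      with t ht using (ht.hasFDerivAt.comp_hasDerivAt t (hline t)).deriv
  have hfderiv : HasFDerivAt (fun y => fderiv ℝ f y v) _ x :=
    (differentiableAt_fderiv_of_contDiffAt_two hf).hasFDerivAt.clm_apply (hasFDerivAt_const v x)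
  rw [hderiv.deriv_eq]
  simpa [Function.comp_def] using (hfderiv.comp_hasDerivAt_of_eq 0 (hline 0) (by simp)).deriv

theorem deriv_deriv_nonpos_of_isLocalMax {g : ℝ → ℝ} {t : ℝ} (hg : ContinuousAt g t)
    (hmax : IsLocalMax g t) : deriv (deriv g) t ≤ 0 := by
  by_contra! hpos
  -- A positive second derivative makes `t` a local minimum as well, so `g` is locally constant.
  have hmin := isLocalMin_of_deriv_deriv_pos hpos hmax.deriv_eq_zero hg
  have hconst : g =ᶠ[𝓝 t] fun _ => g t := by
    filter_upwards [hmin, hmax] with s hs hs' using le_antisymm hs' hs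
  rw [hconst.deriv.deriv_eq] at hpos
  simp at hpos

theorem fderiv_fderiv_apply_nonpos_of_isLocalMax {f : E → ℝ} {x : E} (hf : ContDiffAt ℝ 2 f x)
    (hmax : IsLocalMax f x) (v : E) : fderiv ℝ (fderiv ℝ f) x v v ≤ 0 := by
  have hcont : ContinuousAt (fun t : ℝ => x + t • v) 0 := by fun_prop
  have hx : x + (0 : ℝ) • v = x := by simp
  rw [← deriv_deriv_comp_line hf]
  exact deriv_deriv_nonpos_of_isLocalMax (hf.continuousAt.comp_of_eq hcont hx)
    (IsLocalMax.comp_continuous (by rwa [hx]) hcont)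

theorem fderiv_fderiv_norm_sub_sq_apply {E : Type*} [NormedAddCommGroup E]
    [InnerProductSpace ℝ E] (x y v w : E) :
    fderiv ℝ (fderiv ℝ fun y => ‖y - x‖ ^ 2) y v w = 2 * ⟪v, w⟫ := by
  have hfderiv : fderiv ℝ (fun y => ‖y - x‖ ^ 2) =
      fun y => ((2 : ℝ) • innerSL ℝ : E →L[ℝ] E →L[ℝ] ℝ) (y - x) := by
    ext y v
    rw [fderiv_comp_sub (f := fun y => ‖y‖ ^ 2)]
    simp [fderiv_norm_sq_apply]
  rw [hfderiv, fderiv_comp_sub, ContinuousLinearMap.fderiv]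
  rfl

end SecondDerivatives

/-! ### Subharmonic and harmonic functions -/

section MaximumPrinciple

variable {E : Type*} [NormedAddCommGroup E] [InnerProductSpace ℝ E] [FiniteDimensional ℝ E]

theorem laplacian_nonpos_of_isLocalMax {f : E → ℝ} {x : E} (hf : ContDiffAt ℝ 2 f x)
    (hmax : IsLocalMax f x) : Δ f x ≤ 0 := by
  rw [laplacian_eq_iteratedFDeriv_stdOrthonormalBasis]
  refine Finset.sum_nonpos fun i _ => ?_
  simpa [iteratedFDeriv_two_apply] using fderiv_fderiv_apply_nonpos_of_isLocalMax hf hmax _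

theorem laplacian_norm_sq (x : E) :
    Δ (fun y : E => ‖y‖ ^ 2) x = 2 * Module.finrank ℝ E := by
  have hhess (v : E) : fderiv ℝ (fderiv ℝ fun y : E => ‖y‖ ^ 2) x v v = 2 * ‖v‖ ^ 2 := by
    simpa using fderiv_fderiv_norm_sub_sq_apply 0 x v v
  rw [laplacian_eq_iteratedFDeriv_stdOrthonormalBasis]
  simp [iteratedFDeriv_two_apply, hhess, mul_comm]

theorem le_of_laplacian_nonneg_of_le_frontier [Nontrivial E] {f : E → ℝ} {K : Set E} {m : ℝ}
    (hK : IsCompact K) (hcont : ContinuousOn f K) (hf : ∀ x ∈ interior K, ContDiffAt ℝ 2 f x)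
    (hΔ : ∀ x ∈ interior K, 0 ≤ Δ f x) (hm : ∀ x ∈ frontier K, f x ≤ m) {x : E} (hx : x ∈ K) :
    f x ≤ m := by
  obtain ⟨C, hC⟩ := hK.isBounded.exists_norm_le
  suffices h : ∀ ε : ℝ, 0 < ε → f x ≤ m + ε * C ^ 2 by
    refine le_of_forall_pos_le_add fun η hη => (h (η / (C ^ 2 + 1)) (by positivity)).trans ?_
    rw [add_le_add_iff_left, div_mul_eq_mul_div, div_le_iff₀ (by positivity)]
    linarith
  intro ε hε
  -- Adding `ε‖y‖²` makes the Laplacian positive, so the maximum is not attained inside.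
  have hsq (y : E) : ContDiffAt ℝ 2 (fun y : E => ‖y‖ ^ 2) y := (contDiff_norm_sq ℝ).contDiffAt
  obtain ⟨y, hyK, hymax⟩ := hK.exists_isMaxOn ⟨x, hx⟩
    (f := f + ε • fun y => ‖y‖ ^ 2) (by fun_prop)
  have hy : y ∈ frontier K := by
    refine ⟨subset_closure hyK, fun hyint => ?_⟩
    have hsqε : ContDiffAt ℝ 2 (ε • fun y : E => ‖y‖ ^ 2) y := (hsq y).const_smul ε
    have hle : Δ (f + ε • fun y : E => ‖y‖ ^ 2) y ≤ 0 := laplacian_nonpos_of_isLocalMax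
      ((hf y hyint).add hsqε) (hymax.isLocalMax (mem_interior_iff_mem_nhds.1 hyint))
    rw [(hf y hyint).laplacian_add hsqε, laplacian_smul _ (hsq y), laplacian_norm_sq,
      smul_eq_mul] at hle
    have hdim : (0 : ℝ) < Module.finrank ℝ E := by exact_mod_cast Module.finrank_pos
    have := hΔ y hyint
    have : 0 < ε * (2 * Module.finrank ℝ E) := by positivity
    linarith
  calc f x ≤ f x + ε * ‖x‖ ^ 2 := le_add_of_nonneg_right (by positivity)
    _ ≤ f y + ε * ‖y‖ ^ 2 := hymax hx
    _ ≤ m + ε * C ^ 2 := by gcongr; exacts [hm y hy, hC y hyK]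

end MaximumPrinciple

section PlanarHarmonic

variable {F : Type*} [NormedAddCommGroup F] [NormedSpace ℝ F]

theorem laplacian_complex_apply (f : ℂ → F) (z : ℂ) :
    Δ f z = fderiv ℝ (fderiv ℝ f) z 1 1 + fderiv ℝ (fderiv ℝ f) z Complex.I Complex.I := by
  simp [laplacian_eq_iteratedFDeriv_complexPlane, iteratedFDeriv_two_apply]

theorem exists_differentiableOn_re_eq_of_harmonicOnNhd_ball {h : ℂ → ℝ} {R : ℝ} (hR : 0 < R)
    (hh : HarmonicOnNhd h (ball 0 R)) (h0 : h 0 = 0) :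
    ∃ G : ℂ → ℂ, DifferentiableOn ℂ G (ball 0 R) ∧ G 0 = 0 ∧ ∀ z ∈ ball 0 R, (G z).re = h z := by
  obtain ⟨H, hH, hHre⟩ := hh.exists_analyticOnNhd_ball_re_eq
  have hre (z) (hz : z ∈ ball 0 R) : (H z).re = h z := hHre hz
  refine ⟨fun z => H z - H 0, hH.differentiableOn.sub_const _, sub_self _, fun z hz => ?_⟩
  simp [hre z hz, hre 0 (mem_ball_self hR), h0]

theorem fderiv_re_comp_apply_one {G : ℂ → ℂ} {z : ℂ} (hG : DifferentiableAt ℂ G z) :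
    fderiv ℝ (fun w => (G w).re) z 1 = (deriv G z).re := by
  have hre : HasFDerivAt (fun w => (G w).re) _ z :=
    Complex.reCLM.hasFDerivAt.comp z (hG.hasDerivAt.hasFDerivAt.restrictScalars ℝ)
  rw [hre.fderiv]
  simp

/-- On the circle `‖z‖ = s` the product of the harmonic functions `re` and `h` agrees with a
harmonic function `K`: if `h = re G` with `G` holomorphic and `G 0 = 0`, then
`K = re ((z G(z) + s² G(z) / z) / 2)` works because `s² / z = conj z` there. -/
theorem exists_harmonicOnNhd_eq_re_mul_on_sphere {h : ℂ → ℝ} {s R : ℝ} (hs : 0 < s) (hsR : s < R)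
    (hh : HarmonicOnNhd h (ball 0 R)) (h0 : h 0 = 0) :
    ∃ K : ℂ → ℝ, HarmonicOnNhd K (ball 0 R) ∧ (∀ z ∈ sphere 0 s, K z = z.re * h z) ∧
      K 0 = s ^ 2 / 2 * fderiv ℝ h 0 1 := by
  obtain ⟨G, hG, hG0, hGre⟩ :=
    exists_differentiableOn_re_eq_of_harmonicOnNhd_ball (hs.trans hsR) hh h0
  have hball : ball (0 : ℂ) R ∈ 𝓝 0 := ball_mem_nhds _ (hs.trans hsR)
  set L : ℂ → ℂ := fun z => (1 / 2 : ℂ) * (z * G z + (s : ℂ) ^ 2 * dslope G 0 z) with hL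
  have hLdiff : DifferentiableOn ℂ L (ball 0 R) :=
    ((differentiableOn_id.mul hG).add
      (((Complex.differentiableOn_dslope hball).2 hG).const_mul _)).const_mul _
  refine ⟨fun z => (L z).re,
    fun z hz => (hLdiff.analyticAt (isOpen_ball.mem_nhds hz)).harmonicAt_re, fun z hz => ?_, ?_⟩
  · have hzs : ‖z‖ = s := mem_sphere_zero_iff_norm.1 hz
    have hz0 : z ≠ 0 := norm_pos_iff.1 (hzs ▸ hs)
    have hconj : (s : ℂ) ^ 2 * dslope G 0 z = (starRingEnd ℂ) z * G z := by
      rw [dslope_of_ne _ hz0, slope_def_field, ← hzs, ← Complex.mul_conj', hG0]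
      field_simp
      ring
    simp only [hL, hconj, ← hGre z (sphere_subset_ball hsR hz)]
    simp [Complex.mul_re, Complex.mul_im]
    ring
  · have hfderiv : fderiv ℝ h 0 1 = (deriv G 0).re := by
      have heq : h =ᶠ[𝓝 0] fun z => (G z).re := by
        filter_upwards [hball] with z hz using (hGre z hz).symm
      rw [heq.fderiv_eq, fderiv_re_comp_apply_one (hG.differentiableAt hball)]
    rw [hfderiv]
    simp [hL, ← Complex.ofReal_pow]
    ring

theorem le_of_harmonicOnNhd_ball_of_le {h : ℂ → ℝ} {M R : ℝ} (hM : 0 < M)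
    (hh : HarmonicOnNhd h (ball 0 R)) (h0 : h 0 = 0) (hb : ∀ z ∈ ball 0 R, h z ≤ M) {z : ℂ}
    (hz : z ∈ ball 0 R) : h z ≤ 2 * M * ‖z‖ / (R - ‖z‖) := by
  have hR : 0 < R := pos_of_mem_ball hz
  obtain ⟨G, hG, hG0, hGre⟩ := exists_differentiableOn_re_eq_of_harmonicOnNhd_ball hR hh h0
  calc h z = (G z).re := (hGre z hz).symm
    _ ≤ ‖G z‖ := Complex.re_le_norm _
    _ ≤ 2 * M * ‖z‖ / (R - ‖z‖) :=
      Complex.borelCaratheodory_zero hM hG (fun w hw => (hGre w hw).trans_le (hb w hw)) hR hz hG0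

end PlanarHarmonic

theorem norm_sub_le_of_harmonicOnNhd_ball {E : Type*} [NormedAddCommGroup E]
    [InnerProductSpace ℝ E] {f : ℂ → E} {B R : ℝ} (hf : HarmonicOnNhd f (ball 0 R))
    (hB : 0 < B) (hb : ∀ z ∈ ball 0 R, ‖f z - f 0‖ ≤ B) {z : ℂ} (hz : z ∈ ball 0 R) :
    ‖f z - f 0‖ ≤ 2 * B * ‖z‖ / (R - ‖z‖) := by
  have hRz : 0 < R - ‖z‖ := sub_pos.2 (mem_ball_zero_iff.1 hz)
  rcases eq_or_ne (f z - f 0) 0 with h0 | h0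
  · rw [h0, norm_zero]
    positivity
  set n := ‖f z - f 0‖⁻¹ • (f z - f 0) with hn
  have hn1 : ‖n‖ = 1 := norm_smul_inv_norm h0
  calc ‖f z - f 0‖ = ⟪n, f z - f 0⟫ := by
        rw [hn, real_inner_smul_left, real_inner_self_eq_norm_sq]
        field_simp
    _ ≤ 2 * B * ‖z‖ / (R - ‖z‖) :=
      le_of_harmonicOnNhd_ball_of_le hB ((hf.sub (harmonicOnNhd_const _)).comp_CLM (innerSL ℝ n))
        (by simp) (fun w hw => (real_inner_le_norm _ _).trans
          (by rw [hn1, one_mul]; exact hb w hw)) hz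

/-! ### Conformal harmonic discs in minimally convex regions -/

section Discs

variable {E : Type*} [NormedAddCommGroup E] [InnerProductSpace ℝ E]

/-- `f : ℂ → E` is conformal harmonic on `s`: it is harmonic near each point of `s`, and there its
partial derivatives, taken in the directions `1` and `I`, are orthogonal and of equal norm. This is
`ConformalHarmonicOnDisk` with the plane identified with `ℂ`. -/
structure IsConformalHarmonicOn (f : ℂ → E) (s : Set ℂ) : Prop where
  harmonicOnNhd : HarmonicOnNhd f s
  norm_eq : ∀ z ∈ s, ‖fderiv ℝ f z 1‖ = ‖fderiv ℝ f z Complex.I‖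
  inner_eq : ∀ z ∈ s, ⟪fderiv ℝ f z 1, fderiv ℝ f z Complex.I⟫ = 0

/-- `u` is strongly minimally plurisubharmonic on `V`, with constant `κ`: the trace of its Hessian
on every plane is at least `2 κ`. The plane is given by a conformal basis `v`, `w`, which need not
be normalized. -/
structure StronglyMinimallyPSHOn (u : E → ℝ) (κ : ℝ) (V : Set E) : Prop where
  contDiffAt : ∀ x ∈ V, ContDiffAt ℝ 2 u x
  two_mul_le : ∀ x ∈ V, ∀ v w : E, ‖v‖ = ‖w‖ → ⟪v, w⟫ = 0 →
    2 * κ * ‖v‖ ^ 2 ≤ fderiv ℝ (fderiv ℝ u) x v v + fderiv ℝ (fderiv ℝ u) x w w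

variable {f : ℂ → E} {Ω : Set ℂ} {u : E → ℝ} {κ : ℝ} {V : Set E}

theorem laplacian_comp_of_harmonicAt {z : ℂ} (hu : ContDiffAt ℝ 2 u (f z))
    (hf : HarmonicAt f z) :
    Δ (u ∘ f) z =
      fderiv ℝ (fderiv ℝ u) (f z) (fderiv ℝ f z 1) (fderiv ℝ f z 1) +
      fderiv ℝ (fderiv ℝ u) (f z) (fderiv ℝ f z Complex.I) (fderiv ℝ f z Complex.I) := by
  have hΔ := congrArg (fderiv ℝ u (f z)) hf.2.self_of_nhds
  rw [laplacian_complex_apply, map_add, Pi.zero_apply, map_zero] at hΔ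
  rw [laplacian_complex_apply, fderiv_fderiv_comp_apply hu hf.1, fderiv_fderiv_comp_apply hu hf.1]
  linarith

theorem IsConformalHarmonicOn.laplacian_norm_sub_sq (hf : IsConformalHarmonicOn f Ω) (x : E)
    {z : ℂ} (hz : z ∈ Ω) : Δ (fun z => ‖f z - x‖ ^ 2) z = 4 * ‖fderiv ℝ f z 1‖ ^ 2 := by
  have hsq : ContDiffAt ℝ 2 (fun y => ‖y - x‖ ^ 2) (f z) :=
    (contDiffAt_id.sub contDiffAt_const).norm_sq ℝ
  refine (laplacian_comp_of_harmonicAt hsq (hf.harmonicOnNhd z hz)).trans ?_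
  simp only [fderiv_fderiv_norm_sub_sq_apply, real_inner_self_eq_norm_sq, ← hf.norm_eq z hz]
  ring

theorem StronglyMinimallyPSHOn.two_mul_le_laplacian_comp (hu : StronglyMinimallyPSHOn u κ V)
    (hf : IsConformalHarmonicOn f Ω) {z : ℂ} (hz : z ∈ Ω) (hfz : f z ∈ V) :
    2 * κ * ‖fderiv ℝ f z 1‖ ^ 2 ≤ Δ (u ∘ f) z := by
  rw [laplacian_comp_of_harmonicAt (hu.contDiffAt _ hfz) (hf.harmonicOnNhd z hz)]
  exact hu.two_mul_le _ hfz _ _ (hf.norm_eq z hz) (hf.inner_eq z hz)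

theorem harmonicOnNhd_inner_sub (hf : HarmonicOnNhd f Ω) (n x : E) :
    HarmonicOnNhd (fun z => ⟪n, f z - x⟫) Ω :=
  (hf.sub (harmonicOnNhd_const x)).comp_CLM (innerSL ℝ n)

theorem fderiv_inner_sub_apply {z : ℂ} (hf : DifferentiableAt ℝ f z) (n x : E) (e : ℂ) :
    fderiv ℝ (fun z => ⟪n, f z - x⟫) z e = ⟪n, fderiv ℝ f z e⟫ := by
  rw [fderiv_inner_apply ℝ (by fun_prop) (by fun_prop)]
  simp [fderiv_sub_const]

variable {s R : ℝ}

/-- As `u ∘ f - κ / 2 * ‖f - f 0‖ ^ 2 + H` is subharmonic, it satisfies the maximum principle. The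
negative square leaves room for harmonic functions `H` adapted to `f`. -/
theorem StronglyMinimallyPSHOn.comp_add_harmonic_le (hu : StronglyMinimallyPSHOn u κ V)
    (hf : IsConformalHarmonicOn f (ball 0 R)) (hs : 0 < s) (hsR : s < R)
    (hfV : MapsTo f (closedBall 0 s) V) {H : ℂ → ℝ} (hH : HarmonicOnNhd H (ball 0 R)) {m : ℝ}
    (hm : ∀ z ∈ sphere 0 s, u (f z) - κ / 2 * ‖f z - f 0‖ ^ 2 + H z ≤ m) :
    u (f 0) + H 0 ≤ m := by
  have hsub : closedBall (0 : ℂ) s ⊆ ball 0 R := closedBall_subset_ball hsR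
  have hfC (z) (hz : z ∈ closedBall 0 s) : ContDiffAt ℝ 2 f z := (hf.harmonicOnNhd z (hsub hz)).1
  have huf (z) (hz : z ∈ closedBall 0 s) : ContDiffAt ℝ 2 (u ∘ f) z :=
    (hu.contDiffAt _ (hfV hz)).comp z (hfC z hz)
  set q : ℂ → ℝ := fun z => ‖f z - f 0‖ ^ 2 with hq
  have hqC (z) (hz : z ∈ closedBall 0 s) : ContDiffAt ℝ 2 q z :=
    ((hfC z hz).sub contDiffAt_const).norm_sq ℝ
  have hcq (z) (hz : z ∈ closedBall 0 s) : ContDiffAt ℝ 2 (-(κ / 2) • q) z :=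
    (hqC z hz).const_smul (-(κ / 2))
  have hw (z) (hz : z ∈ closedBall 0 s) : ContDiffAt ℝ 2 (u ∘ f + -(κ / 2) • q) z :=
    (huf z hz).add (hcq z hz)
  have hwH (z) (hz : z ∈ closedBall 0 s) : ContDiffAt ℝ 2 (u ∘ f + -(κ / 2) • q + H) z :=
    (hw z hz).add (hH z (hsub hz)).1
  have hle := le_of_laplacian_nonneg_of_le_frontier (m := m) (isCompact_closedBall (0 : ℂ) s)
    (fun z hz => (hwH z hz).continuousAt.continuousWithinAt)
    (fun z hz => hwH z (interior_subset hz)) (fun z hz => ?_) (fun z hz => ?_)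
    (mem_closedBall_self hs.le)
  · simpa [hq] using hle
  · have hz := interior_subset hz
    have hlap := hu.two_mul_le_laplacian_comp hf (hsub hz) (hfV hz)
    rw [(hw z hz).laplacian_add (hH z (hsub hz)).1,
      (huf z hz).laplacian_add (hcq z hz), laplacian_smul _ (hqC z hz),
      hf.laplacian_norm_sub_sq _ (hsub hz), (hH z (hsub hz)).2.self_of_nhds, Pi.zero_apply,
      smul_eq_mul]
    linarith
  · rw [frontier_closedBall _ hs.ne'] at hz
    simpa [hq, sub_eq_add_neg] using hm z hz

/-- The harmonic function used is a multiple of the harmonic extension of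
`re z * ⟪f_x(0), f z - f 0⟫` from the circle `‖z‖ = s`. -/
theorem StronglyMinimallyPSHOn.mul_norm_fderiv_sq_le (hu : StronglyMinimallyPSHOn u κ V)
    (hκ : 0 ≤ κ) (hf : IsConformalHarmonicOn f (ball 0 R)) (hs : 0 < s) (hsR : s < R)
    (hfV : MapsTo f (closedBall 0 s) V) (hneg : ∀ z ∈ sphere 0 s, u (f z) ≤ 0) :
    κ * s ^ 2 / 8 * ‖fderiv ℝ f 0 1‖ ^ 2 ≤ -u (f 0) := by
  set W := fderiv ℝ f 0 1
  obtain ⟨K, hK, hKs, hK0⟩ := exists_harmonicOnNhd_eq_re_mul_on_sphere hs hsR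
    (harmonicOnNhd_inner_sub hf.harmonicOnNhd W (f 0)) (by simp)
  have hf0 : DifferentiableAt ℝ f 0 :=
    (hf.harmonicOnNhd 0 (mem_ball_self (hs.trans hsR))).1.differentiableAt two_ne_zero
  rw [fderiv_inner_sub_apply hf0, real_inner_self_eq_norm_sq] at hK0
  have hmajorant := hu.comp_add_harmonic_le (m := κ / 2 * (s ^ 2 * ‖W‖ ^ 2 / 4)) hf hs hsR hfV
    (hK.const_smul (c := κ / 2)) fun z hz => ?_
  · rw [Pi.smul_apply, hK0, smul_eq_mul] at hmajorant
    linarith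
  · have hre : |z.re| ≤ s := mem_sphere_zero_iff_norm.1 hz ▸ Complex.abs_re_le_norm z
    have hKz : K z ≤ ‖f z - f 0‖ ^ 2 + s ^ 2 * ‖W‖ ^ 2 / 4 :=
      calc K z = z.re * ⟪W, f z - f 0⟫ := hKs z hz
        _ ≤ |z.re| * |⟪W, f z - f 0⟫| := (le_abs_self _).trans (abs_mul _ _).le
        _ ≤ s * (‖W‖ * ‖f z - f 0‖) := by gcongr; exact abs_real_inner_le_norm _ _
        _ ≤ ‖f z - f 0‖ ^ 2 + s ^ 2 * ‖W‖ ^ 2 / 4 := by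
          linarith [sq_nonneg (‖f z - f 0‖ - s * ‖W‖ / 2)]
    have := mul_le_mul_of_nonneg_left hKz (div_nonneg hκ zero_le_two)
    rw [Pi.smul_apply, smul_eq_mul]
    linarith [hneg z hz]

/-- With `h z = ⟪n, f z - f 0⟫` and `K` the harmonic extension of `re z * h z` from the circle, the
harmonic function used is a multiple of `s * h + σ * K`. On the circle it is a multiple of
`(s + σ * re z) * h z`, whose first factor is nonnegative, so a one-sided bound on `h` suffices. -/
theorem StronglyMinimallyPSHOn.mul_inner_fderiv_le (hu : StronglyMinimallyPSHOn u κ V)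
    (hκ : 0 < κ) (hf : IsConformalHarmonicOn f (ball 0 R)) (hs : 0 < s) (hsR : s < R)
    (hfV : MapsTo f (closedBall 0 s) V) (hneg : ∀ z ∈ sphere 0 s, u (f z) ≤ 0) {a b σ : ℝ}
    (ha : 0 ≤ a) (hb : 0 < b) (hσ : |σ| ≤ 1) (n : E)
    (hn : ∀ z ∈ sphere 0 s, ⟪n, f z - f 0⟫ ≤ a + b * ‖f z - f 0‖ ^ 2) :
    σ * ⟪n, fderiv ℝ f 0 1⟫ ≤ 4 * a / s + 8 * b / (κ * s) * -u (f 0) := by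
  have hh := harmonicOnNhd_inner_sub hf.harmonicOnNhd n (f 0)
  obtain ⟨K, hK, hKs, hK0⟩ := exists_harmonicOnNhd_eq_re_mul_on_sphere hs hsR hh (by simp)
  have hf0 : DifferentiableAt ℝ f 0 :=
    (hf.harmonicOnNhd 0 (mem_ball_self (hs.trans hsR))).1.differentiableAt two_ne_zero
  rw [fderiv_inner_sub_apply hf0] at hK0
  -- `μ` is chosen so that `μ * (2 * s) * (b * ‖f - f 0‖ ^ 2)` is the available negative square.
  set μ := κ / (4 * s * b) with hμ
  have hμpos : 0 < μ := by positivity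
  have hmajorant := hu.comp_add_harmonic_le (m := μ * (2 * s * a)) hf hs hsR hfV
    (((hh.const_smul (c := s)).add (hK.const_smul (c := σ))).const_smul (c := μ)) fun z hz => ?_
  · simp only [Pi.smul_apply, Pi.add_apply, hK0, sub_self, inner_zero_right, smul_eq_mul,
      mul_zero, zero_add] at hmajorant
    calc σ * ⟪n, fderiv ℝ f 0 1⟫
        = μ * (σ * (s ^ 2 / 2 * ⟪n, fderiv ℝ f 0 1⟫)) * (2 / (μ * s ^ 2)) := by field_simp
      _ ≤ (μ * (2 * s * a) - u (f 0)) * (2 / (μ * s ^ 2)) := by gcongr; linarith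
      _ = 4 * a / s + 8 * b / (κ * s) * -u (f 0) := by rw [hμ]; field_simp; ring
  · have hre : |σ * z.re| ≤ s := by
      rw [abs_mul, ← mem_sphere_zero_iff_norm.1 hz, ← one_mul ‖z‖]
      gcongr
      exact Complex.abs_re_le_norm z
    obtain ⟨hre₁, hre₂⟩ := abs_le.1 hre
    have hfactor : (s + σ * z.re) * ⟪n, f z - f 0⟫ ≤ 2 * s * (a + b * ‖f z - f 0‖ ^ 2) :=
      calc (s + σ * z.re) * ⟪n, f z - f 0⟫
          ≤ (s + σ * z.re) * (a + b * ‖f z - f 0‖ ^ 2) :=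
            mul_le_mul_of_nonneg_left (hn z hz) (by linarith)
        _ ≤ 2 * s * (a + b * ‖f z - f 0‖ ^ 2) := by gcongr; linarith
    have hsquare : μ * (2 * s * (b * ‖f z - f 0‖ ^ 2)) = κ / 2 * ‖f z - f 0‖ ^ 2 := by
      rw [hμ]; field_simp; ring
    have := mul_le_mul_of_nonneg_left hfactor hμpos.le
    simp only [Pi.smul_apply, Pi.add_apply, hKs z hz, smul_eq_mul]
    linarith [hneg z hz]

theorem StronglyMinimallyPSHOn.abs_inner_fderiv_le (hu : StronglyMinimallyPSHOn u κ V)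
    (hκ : 0 < κ) (hf : IsConformalHarmonicOn f (ball 0 R)) (hs : 0 < s) (hsR : s < R)
    (hfV : MapsTo f (closedBall 0 s) V) (hneg : ∀ z ∈ sphere 0 s, u (f z) ≤ 0) {a b : ℝ}
    (ha : 0 ≤ a) (hb : 0 < b) (n : E)
    (hn : ∀ z ∈ sphere 0 s, ⟪n, f z - f 0⟫ ≤ a + b * ‖f z - f 0‖ ^ 2) :
    |⟪n, fderiv ℝ f 0 1⟫| ≤ 4 * a / s + 8 * b / (κ * s) * -u (f 0) :=
  abs_le'.2 ⟨by
    simpa using hu.mul_inner_fderiv_le hκ hf hs hsR hfV hneg ha hb (σ := 1) (by simp) n hn, by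
    simpa using hu.mul_inner_fderiv_le hκ hf hs hsR hfV hneg ha hb (σ := -1) (by simp) n hn⟩

end Discs

section Compactness

variable {E : Type*} [NormedAddCommGroup E] [InnerProductSpace ℝ E] {u : E → ℝ} {κ : ℝ} {K : Set E}

theorem StronglyMinimallyPSHOn.of_unit (hu : ∀ x ∈ K, ContDiffAt ℝ 2 u x)
    (hunit : ∀ x ∈ K, ∀ v w : E, ‖v‖ = 1 → ‖w‖ = 1 → ⟪v, w⟫ = 0 →
      2 * κ ≤ fderiv ℝ (fderiv ℝ u) x v v + fderiv ℝ (fderiv ℝ u) x w w) :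
    StronglyMinimallyPSHOn u κ K := by
  refine ⟨hu, fun x hx v w hvw hin => ?_⟩
  rcases eq_or_ne v 0 with rfl | hv
  · obtain rfl : w = 0 := by simpa using hvw.symm
    simp
  have hv' : ‖v‖ ≠ 0 := norm_ne_zero_iff.2 hv
  have htrace := hunit x hx (‖v‖⁻¹ • v) (‖v‖⁻¹ • w) (by simp [norm_smul, hv'])
    (by simp [norm_smul, ← hvw, hv']) (by simp [inner_smul_left, inner_smul_right, hin])
  simp only [map_smul, smul_apply, smul_eq_mul] at htrace
  calc 2 * κ * ‖v‖ ^ 2 ≤ _ := mul_le_mul_of_nonneg_right htrace (sq_nonneg _)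
    _ = _ := by field_simp

theorem StronglyMinimallyPSHOn.mono {V : Set E} (hu : StronglyMinimallyPSHOn u κ K)
    (hV : V ⊆ K) : StronglyMinimallyPSHOn u κ V :=
  ⟨fun x hx => hu.contDiffAt x (hV hx), fun x hx => hu.two_mul_le x (hV hx)⟩

theorem exists_stronglyMinimallyPSHOn_of_isCompact [ProperSpace E] (hK : IsCompact K)
    (hu : ∀ x ∈ K, ContDiffAt ℝ 2 u x)
    (hpos : ∀ x ∈ K, ∀ v w : E, ‖v‖ = 1 → ‖w‖ = 1 → ⟪v, w⟫ = 0 →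
      0 < fderiv ℝ (fderiv ℝ u) x v v + fderiv ℝ (fderiv ℝ u) x w w) :
    ∃ κ > 0, StronglyMinimallyPSHOn u κ K := by
  set Q : Set (E × E × E) := (K ×ˢ (sphere 0 1 ×ˢ sphere 0 1)) ∩ {q | ⟪q.2.1, q.2.2⟫ = 0}
  have hQ : IsCompact Q :=
    (hK.prod ((isCompact_sphere _ _).prod (isCompact_sphere _ _))).inter_right
      (isClosed_eq (by fun_prop) continuous_const)
  have hhess : ContinuousOn (fun q : E × E × E => fderiv ℝ (fderiv ℝ u) q.1) Q := by
    refine ContinuousOn.comp (t := K) (fun x hx => ContinuousAt.continuousWithinAt ?_)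
      continuousOn_fst fun q hq => hq.1.1
    exact (((hu x hx).fderiv_right (m := 1) le_rfl).fderiv_right (m := 0) le_rfl).continuousAt
  have htrace : ContinuousOn (fun q : E × E × E => fderiv ℝ (fderiv ℝ u) q.1 q.2.1 q.2.1 +
      fderiv ℝ (fderiv ℝ u) q.1 q.2.2 q.2.2) Q := by
    fun_prop
  obtain ⟨κ, hκ, hle⟩ := hQ.exists_forall_le' htrace (a := 0) fun q ⟨⟨hx, hv, hw⟩, hvw⟩ =>
    hpos _ hx _ _ (by simpa using hv) (by simpa using hw) hvw
  refine ⟨κ / 2, half_pos hκ, .of_unit hu fun x hx v w hv hw hvw => ?_⟩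
  rw [mul_div_cancel₀ κ two_ne_zero]
  exact hle (x, v, w) ⟨⟨hx, by simpa using hv, by simpa using hw⟩, hvw⟩

end Compactness

/-! ### Geometry of the boundary -/

section Boundary

theorem norm_image_sub_sub_fderiv_le_of_lipschitzOnWith {E F : Type*} [NormedAddCommGroup E]
    [NormedSpace ℝ E] [NormedAddCommGroup F] [NormedSpace ℝ F] {f : E → F} {M : ℝ≥0} {p y : E}
    (hf : ∀ z ∈ closedBall p ‖y - p‖, DifferentiableAt ℝ f z)
    (hf' : LipschitzOnWith M (fderiv ℝ f) (closedBall p ‖y - p‖)) :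
    ‖f y - f p - fderiv ℝ f p (y - p)‖ ≤ M * ‖y - p‖ ^ 2 := by
  have hp : p ∈ closedBall p ‖y - p‖ := mem_closedBall_self (norm_nonneg _)
  rw [sq, ← mul_assoc]
  refine (convex_closedBall p ‖y - p‖).norm_image_sub_le_of_norm_fderiv_le' hf (fun z hz => ?_) hp
    (mem_closedBall.2 (dist_eq_norm y p).le)
  exact (hf'.norm_sub_le hz hp).trans (by gcongr; exact mem_closedBall_iff_norm.1 hz)

theorem exists_lipschitzOnWith_of_isCompact_of_contDiffAt {E F : Type*} [NormedAddCommGroup E]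
    [NormedSpace ℝ E] [NormedAddCommGroup F] [NormedSpace ℝ F] {f : E → F} {K : Set E}
    (hK : IsCompact K) (hf : ∀ x ∈ K, ContDiffAt ℝ 1 f x) : ∃ L, LipschitzOnWith L f K := by
  refine LocallyLipschitzOn.exists_lipschitzOnWith_of_compact hK fun x hx => ?_
  obtain ⟨L, t, ht, hL⟩ := (hf x hx).exists_lipschitzOnWith
  exact ⟨L, t, mem_nhdsWithin_of_mem_nhds ht, hL⟩

variable {E : Type*} [NormedAddCommGroup E] [InnerProductSpace ℝ E]

/-- `u : U → ℝ` is a `C²` defining function of `D`, whose boundary is contained in the open set `U`: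
near the boundary `D` is `{u < 0}`, and `u` vanishes to first order exactly on the boundary. -/
structure IsDefiningFunction (D U : Set E) (u : E → ℝ) : Prop where
  isOpen : IsOpen U
  contDiffOn : ContDiffOn ℝ 2 u U
  inter_eq : D ∩ U = {x | x ∈ U ∧ u x < 0}
  frontier_eq : frontier D = {x | x ∈ U ∧ u x = 0}
  fderiv_ne_zero : ∀ x ∈ frontier D, fderiv ℝ u x ≠ 0

/-- The two-sided ball condition: the balls of radius `R` tangent to each other at `p`, with common
normal `n`, lie in `D` and outside `D` respectively. It replaces the second-order estimates for a
defining function near `p`, and makes `n` the outer unit normal of `D` at `p`. -/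
structure HasTwoSidedBall (D : Set E) (p n : E) (R : ℝ) : Prop where
  pos : 0 < R
  norm_eq_one : ‖n‖ = 1
  ball_subset : ball (p - R • n) R ⊆ D
  disjoint_ball : Disjoint D (ball (p + R • n) R)

theorem neg_of_mem_ball {n p y : E} {c M R t : ℝ} (hn : ‖n‖ = 1) (hc : 0 < c) (hR : 0 < R)
    (hMR : 2 * M * R ≤ c) (hy : y ∈ ball (p - R • n) R)
    (ht : t ≤ c * ⟪n, y - p⟫ + M * ‖y - p‖ ^ 2) : t < 0 := by
  rw [mem_ball, dist_eq_norm, ← sub_add, ← sq_lt_sq₀ (norm_nonneg _) hR.le, norm_add_sq_real,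
    real_inner_smul_right, norm_smul, hn, mul_one, Real.norm_eq_abs, sq_abs, real_inner_comm] at hy
  have hball : ‖y - p‖ ^ 2 + 2 * R * ⟪n, y - p⟫ < 0 := by linarith
  have : 2 * R * t < 0 := calc
    2 * R * t ≤ 2 * R * (c * ⟪n, y - p⟫ + M * ‖y - p‖ ^ 2) := by gcongr
    _ = c * (2 * R * ⟪n, y - p⟫) + 2 * M * R * ‖y - p‖ ^ 2 := by ring
    _ ≤ c * (2 * R * ⟪n, y - p⟫) + c * ‖y - p‖ ^ 2 := by gcongr
    _ = c * (‖y - p‖ ^ 2 + 2 * R * ⟪n, y - p⟫) := by ring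
    _ < 0 := mul_neg_of_pos_of_neg hc hball
  exact neg_of_mul_neg_right this (by positivity)

variable {D U K : Set E} {u : E → ℝ} {p n x y : E} {R : ℝ}

namespace IsDefiningFunction

theorem frontier_subset (hu : IsDefiningFunction D U u) : frontier D ⊆ U :=
  hu.frontier_eq ▸ fun _ hx => hx.1

theorem eq_zero (hu : IsDefiningFunction D U u) (hp : p ∈ frontier D) : u p = 0 :=
  (hu.frontier_eq ▸ hp : p ∈ {x | x ∈ U ∧ u x = 0}).2

theorem mem_iff (hu : IsDefiningFunction D U u) (hy : y ∈ U) : y ∈ D ↔ u y < 0 := by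
  simpa [hy] using Set.ext_iff.1 hu.inter_eq y

theorem contDiffAt (hu : IsDefiningFunction D U u) (hy : y ∈ U) : ContDiffAt ℝ 2 u y :=
  hu.contDiffOn.contDiffAt (hu.isOpen.mem_nhds hy)

theorem differentiableAt (hu : IsDefiningFunction D U u) (hy : y ∈ U) : DifferentiableAt ℝ u y :=
  (hu.contDiffAt hy).differentiableAt two_ne_zero

theorem hasTwoSidedBall [CompleteSpace E] (hu : IsDefiningFunction D U u) (hp : p ∈ frontier D)
    {ρ : ℝ} {M : ℝ≥0} (hU : closedBall p ρ ⊆ U)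
    (hM : LipschitzOnWith M (fderiv ℝ u) (closedBall p ρ)) (hR : 0 < R) (hRρ : 2 * R ≤ ρ)
    (hMR : 2 * M * R ≤ ‖fderiv ℝ u p‖) : ∃ n, HasTwoSidedBall D p n R := by
  set c := ‖fderiv ℝ u p‖ with hc_def
  have hc : 0 < c := norm_pos_iff.2 (hu.fderiv_ne_zero p hp)
  set n := c⁻¹ • (toDual ℝ E).symm (fderiv ℝ u p)
  have hn : ‖n‖ = 1 := by
    rw [norm_smul, LinearIsometryEquiv.norm_map, norm_inv, ← hc_def, Real.norm_of_nonneg hc.le,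
      inv_mul_cancel₀ hc.ne']
  have hderiv : ∀ v, fderiv ℝ u p v = c * ⟪n, v⟫ := fun v => by
    rw [real_inner_smul_left, mul_inv_cancel_left₀ hc.ne', toDual_symm_apply]
  have htaylor : ∀ y ∈ closedBall p ρ, |u y - c * ⟪n, y - p⟫| ≤ M * ‖y - p‖ ^ 2 := fun y hy => by
    have hsub := closedBall_subset_closedBall (x := p) (mem_closedBall_iff_norm.1 hy)
    simpa [hu.eq_zero hp, hderiv] using norm_image_sub_sub_fderiv_le_of_lipschitzOnWith
      (fun z hz => hu.differentiableAt (hU (hsub hz))) (hM.mono hsub)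
  have hball : ∀ {m : E}, ‖m‖ = 1 → ball (p - R • m) R ⊆ closedBall p ρ := fun {m} hm y hy => by
    have : dist y p ≤ dist y (p - R • m) + dist (p - R • m) p := dist_triangle _ _ _
    rw [dist_self_sub_left, norm_smul, hm, mul_one, Real.norm_of_nonneg hR.le] at this
    exact mem_closedBall.2 (by linarith [mem_ball.1 hy])
  refine ⟨n, hR, hn, fun y hy => ?_, Set.disjoint_right.2 fun y hy hyD => ?_⟩
  · refine (hu.mem_iff (hU (hball hn hy))).2 (neg_of_mem_ball hn hc hR hMR hy ?_)
    linarith [(abs_le.1 (htaylor y (hball hn hy))).2]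
  · rw [← sub_neg_eq_add, ← smul_neg] at hy
    have hn' : ‖-n‖ = 1 := by rwa [norm_neg]
    have hyK := hball hn' hy
    have : -u y < 0 := neg_of_mem_ball (M := M) hn' hc hR hMR hy (by
      rw [inner_neg_left]
      linarith [(abs_le.1 (htaylor y hyK)).1])
    linarith [(hu.mem_iff (hU hyK)).1 hyD]

theorem exists_forall_hasTwoSidedBall [ProperSpace E] (hu : IsDefiningFunction D U u)
    (hfr : IsCompact (frontier D)) {ρ : ℝ} (hρ : 0 < ρ) (hρU : cthickening ρ (frontier D) ⊆ U) :
    ∃ R, 0 < R ∧ R ≤ 1 ∧ ∀ p ∈ frontier D, ∃ n, HasTwoSidedBall D p n R := by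
  have hfderiv : ∀ y ∈ U, ContDiffAt ℝ 1 (fderiv ℝ u) y := fun y hy =>
    (hu.contDiffAt hy).fderiv_right le_rfl
  obtain ⟨M, hM⟩ := exists_lipschitzOnWith_of_isCompact_of_contDiffAt hfr.cthickening
    fun y hy => hfderiv y (hρU hy)
  obtain ⟨c, hc, hle⟩ := hfr.exists_forall_le' (f := fun p => ‖fderiv ℝ u p‖) (a := 0)
    (fun p hp => (hfderiv p (hu.frontier_subset hp)).continuousAt.norm.continuousWithinAt)
    fun p hp => norm_pos_iff.2 (hu.fderiv_ne_zero p hp)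
  set R := min 1 (min (ρ / 2) (c / (2 * (M + 1))))
  have hR : 0 < R := by positivity
  have hRρ : R ≤ ρ / 2 := (min_le_right _ _).trans (min_le_left _ _)
  have hRc : R ≤ c / (2 * (M + 1)) := (min_le_right _ _).trans (min_le_right _ _)
  refine ⟨R, hR, min_le_left _ _, fun p hp => ?_⟩
  have hball : closedBall p ρ ⊆ cthickening ρ (frontier D) := closedBall_subset_cthickening hp ρ
  refine hu.hasTwoSidedBall hp (hball.trans hρU) (hM.mono hball) hR (by linarith) ?_
  rw [le_div_iff₀ (by positivity)] at hRc
  linarith [hle p hp]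

end IsDefiningFunction

theorem ball_infDist_frontier_subset (hD : IsOpen D) (hx : x ∈ D) :
    ball x (infDist x (frontier D)) ⊆ D := by
  rcases (infDist_nonneg (x := x) (s := frontier D)).eq_or_lt with h | h
  · simp [← h]
  refine (convex_ball x _).isPreconnected.subset_of_closure_inter_subset hD
    ⟨x, mem_ball_self h, hx⟩ fun y ⟨hyc, hyb⟩ => ?_
  by_contra hy
  exact disjoint_ball_infDist.le_bot ⟨hyb, hD.frontier_eq ▸ ⟨hyc, hy⟩⟩

/-- The ball about `x` through `p` and the exterior ball at `p` are tangent, so the triangle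
inequality between their centres and `p` is an equality. -/
theorem HasTwoSidedBall.sub_eq_dist_smul (h : HasTwoSidedBall D p n R) (hxp : x ≠ p)
    (hx : ball x (dist x p) ⊆ D) : p - x = dist x p • n := by
  have hδ : 0 < dist x p := dist_pos.2 hxp
  have hRn : ‖R • n‖ = R := by rw [norm_smul, h.norm_eq_one, mul_one, Real.norm_of_nonneg h.pos.le]
  have hray : SameRay ℝ (p - x) (R • n) := by
    refine sameRay_iff_norm_add.2 ((norm_add_le _ _).antisymm ?_)
    have := (disjoint_ball_ball_iff hδ h.pos).1 (h.disjoint_ball.mono_left hx)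
    rwa [hRn, ← dist_eq_norm' x p, ← add_sub_right_comm, ← dist_eq_norm']
  have := sameRay_iff_norm_smul_eq.1 hray
  rw [hRn, ← dist_eq_norm', smul_comm] at this
  exact (smul_right_injective E h.pos.ne' this).symm

theorem HasTwoSidedBall.inner_sub_le (h : HasTwoSidedBall D p n R) {δ : ℝ} (hδ : 0 ≤ δ)
    (hx : p - x = δ • n) (hy : y ∈ D) : ⟪n, y - x⟫ ≤ δ + 1 / (2 * R) * ‖y - x‖ ^ 2 := by
  have hR := h.pos
  have hout : R ≤ ‖y - x - (δ + R) • n‖ := by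
    have := Set.disjoint_left.1 h.disjoint_ball hy
    rwa [mem_ball, not_lt, dist_eq_norm, eq_add_of_sub_eq hx, add_comm _ x, add_assoc, ← add_smul,
      ← sub_sub] at this
  have hsq : 2 * (δ + R) * ⟪n, y - x⟫ ≤ ‖y - x‖ ^ 2 + 2 * δ * R + δ ^ 2 := by
    have := pow_le_pow_left₀ hR.le hout 2
    rw [norm_sub_sq_real, real_inner_smul_right, norm_smul, h.norm_eq_one, mul_one,
      Real.norm_eq_abs, sq_abs, real_inner_comm] at this
    linarith
  refine le_of_mul_le_mul_left (hsq.trans ?_) (show 0 < 2 * (δ + R) by positivity)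
  have hexpand : 2 * (δ + R) * (δ + 1 / (2 * R) * ‖y - x‖ ^ 2) =
      ‖y - x‖ ^ 2 + 2 * δ * R + δ ^ 2 + (δ ^ 2 + δ / R * ‖y - x‖ ^ 2) := by
    field_simp; ring
  have : 0 ≤ δ ^ 2 + δ / R * ‖y - x‖ ^ 2 := by positivity
  linarith

theorem sub_add_mem_ball {Y : E} {δ : ℝ} (hn : ‖n‖ = 1) (hR : 0 < R)
    (hY : 2 * (R - δ) * ⟪n, Y⟫ + ‖Y‖ ^ 2 < δ * (2 * R - δ)) :
    p - δ • n + Y ∈ ball (p - R • n) R := by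
  have : p - δ • n + Y - (p - R • n) = (R - δ) • n + Y := by module
  rw [mem_ball, dist_eq_norm, this, ← sq_lt_sq₀ (norm_nonneg _) hR.le, norm_add_sq_real,
    real_inner_smul_left, norm_smul, hn, mul_one, Real.norm_eq_abs, sq_abs]
  linarith

theorem mapsTo_closedBall_of_harmonicOnNhd_ball {f : ℂ → E} {B s ρ : ℝ}
    (hf : HarmonicOnNhd f (ball 0 1)) (hB : 0 < B) (hfB : ∀ z ∈ ball 0 1, ‖f z - f 0‖ ≤ B)
    (hs : s ≤ 1 / 2) (hsB : 8 * B * s ≤ ρ) (hp : dist (f 0) p ≤ ρ / 2) :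
    MapsTo f (closedBall 0 s) (closedBall p ρ) := by
  intro z hz
  rw [mem_closedBall_zero_iff] at hz
  have hz' : z ∈ ball (0 : ℂ) 1 := mem_ball_zero_iff.2 (by linarith)
  have hs0 : 0 ≤ s := (norm_nonneg z).trans hz
  have hmove : dist (f z) (f 0) ≤ ρ / 2 := calc
    dist (f z) (f 0) ≤ 2 * B * ‖z‖ / (1 - ‖z‖) := by
      rw [dist_eq_norm]
      exact norm_sub_le_of_harmonicOnNhd_ball hf hB hfB hz'
    _ ≤ 2 * B * s / (1 / 2) := by gcongr; linarith
    _ ≤ ρ / 2 := by linarith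
  exact mem_closedBall.2 ((dist_triangle _ (f 0) _).trans (by linarith))

theorem HasTwoSidedBall.abs_inner_fderiv_le (h : HasTwoSidedBall D p n R) {V : Set E} {κ : ℝ}
    (hu : StronglyMinimallyPSHOn u κ V) (hκ : 0 < κ) (hDV : ∀ y ∈ D ∩ V, u y ≤ 0) {f : ℂ → E}
    {s : ℝ} (hs : 0 < s) (hs1 : s < 1) (hf : IsConformalHarmonicOn f (ball 0 1))
    (hfD : MapsTo f (ball 0 1) D) (hfV : MapsTo f (closedBall 0 s) V) {δ : ℝ} (hδ : 0 ≤ δ)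
    (hx : p - f 0 = δ • n) :
    |⟪n, fderiv ℝ f 0 1⟫| ≤ 4 * δ / s + 4 / (R * κ * s) * -u (f 0) := by
  have hR := h.pos
  have hsub : sphere (0 : ℂ) s ⊆ ball 0 1 :=
    sphere_subset_closedBall.trans (closedBall_subset_ball hs1)
  refine (hu.abs_inner_fderiv_le hκ hf hs hs1 hfV
    (fun z hz => hDV _ ⟨hfD (hsub hz), hfV (sphere_subset_closedBall hz)⟩) hδ
    (by positivity : 0 < 1 / (2 * R)) n
    fun z hz => h.inner_sub_le hδ hx (hfD (hsub hz))).trans_eq ?_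
  field_simp
  ring

theorem norm_smul_add_smul_sq {v w : E} (hnorm : ‖w‖ = ‖v‖) (hinner : ⟪v, w⟫ = 0) (s t : ℝ) :
    ‖s • v + t • w‖ ^ 2 = (s ^ 2 + t ^ 2) * ‖v‖ ^ 2 := by
  rw [norm_add_sq_real, real_inner_smul_left, real_inner_smul_right, hinner, norm_smul, norm_smul,
    hnorm, mul_pow, mul_pow, Real.norm_eq_abs, Real.norm_eq_abs, sq_abs, sq_abs]
  ring

theorem exists_orthogonal [FiniteDimensional ℝ E] (hE : 3 ≤ Module.finrank ℝ E) (v n : E) :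
    ∃ w : E, ‖w‖ = ‖v‖ ∧ ⟪v, w⟫ = 0 ∧ ⟪n, w⟫ = 0 := by
  classical
  set K := Submodule.span ℝ ({v, n} : Set E)
  have hK : Module.finrank ℝ K ≤ 2 :=
    (finrank_span_le_card _).trans (by simpa using Finset.card_le_two)
  have hK' : Kᗮ ≠ ⊥ := fun hbot => by
    have := K.finrank_add_finrank_orthogonal
    rw [hbot, finrank_bot] at this
    omega
  obtain ⟨w, hw, hw0⟩ := Submodule.exists_mem_ne_zero_of_ne_bot hK'
  have hv : ⟪v, w⟫ = 0 := hw v (Submodule.subset_span (by simp))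
  have hn : ⟪n, w⟫ = 0 := hw n (Submodule.subset_span (by simp))
  refine ⟨(‖v‖ / ‖w‖) • w, ?_, by simp [inner_smul_right, hv], by simp [inner_smul_right, hn]⟩
  rw [norm_smul, norm_div, norm_norm, norm_norm, div_mul_cancel₀ _ (norm_ne_zero_iff.2 hw0)]

end Boundary

/-! ### Discs in Euclidean space -/

section EuclideanDiscs

variable {d : ℕ} {D : Set (Euc d)} {x p v : Euc d} {δ : ℝ}

/-- The isometric identification of `ℂ` with `ℝ²`. -/
def planeIso : ℂ ≃ₗᵢ[ℝ] Euc 2 := Complex.orthonormalBasisOneI.repr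

theorem planeIso_one : planeIso 1 = EuclideanSpace.single 0 1 := by
  simpa [planeIso] using Complex.orthonormalBasisOneI.repr_self 0

theorem planeIso_I : planeIso Complex.I = EuclideanSpace.single 1 1 := by
  simpa [planeIso] using Complex.orthonormalBasisOneI.repr_self 1

theorem planeIso_mem_unitDisk {z : ℂ} (hz : z ∈ ball 0 1) : planeIso z ∈ unitDisk := by
  simpa [unitDisk] using hz

theorem fderiv_comp_planeIso_apply {F : Type*} [NormedAddCommGroup F] [NormedSpace ℝ F]
    (f : Euc 2 → F) (z v : ℂ) :
    fderiv ℝ (f ∘ planeIso) z v = fderiv ℝ f (planeIso z) (planeIso v) :=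
  congrArg (· v) (planeIso.toContinuousLinearEquiv.comp_right_fderiv (f := f) (x := z))

theorem fderiv_comp_planeIso_apply_one (f : Euc 2 → Euc d) (z : ℂ) :
    fderiv ℝ (f ∘ planeIso) z 1 = pd 0 f (planeIso z) := by
  rw [fderiv_comp_planeIso_apply, planeIso_one, pd]

theorem fderiv_comp_planeIso_apply_I (f : Euc 2 → Euc d) (z : ℂ) :
    fderiv ℝ (f ∘ planeIso) z Complex.I = pd 1 f (planeIso z) := by
  rw [fderiv_comp_planeIso_apply, planeIso_I, pd]

theorem isConformalHarmonicOn_comp_planeIso {f : Euc 2 → Euc d} (hf : ConformalHarmonicOnDisk f) :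
    IsConformalHarmonicOn (f ∘ planeIso) (ball 0 1) := by
  obtain ⟨hC, hharm, hconf⟩ := hf
  have hC' : ∀ z ∈ ball (0 : ℂ) 1, ContDiffAt ℝ 2 (f ∘ planeIso) z := fun z hz =>
    (hC.contDiffAt (isOpen_ball.mem_nhds (planeIso_mem_unitDisk hz))).comp z
      planeIso.contDiff.contDiffAt
  have hΔ : ∀ z ∈ ball (0 : ℂ) 1, Δ (f ∘ planeIso) z = 0 := fun z hz => by
    rw [laplacian_complex_apply, ← fderiv_fderiv_const_apply (hC' z hz),
      ← fderiv_fderiv_const_apply (hC' z hz)]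
    simp only [fderiv_comp_planeIso_apply_one, fderiv_comp_planeIso_apply_I]
    have := hharm _ (planeIso_mem_unitDisk hz)
    rwa [← planeIso_one, ← planeIso_I, ← fderiv_comp_planeIso_apply,
      ← fderiv_comp_planeIso_apply] at this
  refine ⟨fun z hz => ⟨hC' z hz, ?_⟩, fun z hz => ?_, fun z hz => ?_⟩
  · filter_upwards [isOpen_ball.mem_nhds hz] with w hw using hΔ w hw
  · rw [fderiv_comp_planeIso_apply_one, fderiv_comp_planeIso_apply_I]
    exact (hconf _ (planeIso_mem_unitDisk hz)).1
  · rw [fderiv_comp_planeIso_apply_one, fderiv_comp_planeIso_apply_I]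
    exact (hconf _ (planeIso_mem_unitDisk hz)).2

theorem conformalHarmonicOnDisk_const_add (x : Euc d) {L : Euc 2 →L[ℝ] Euc d}
    (hnorm : ‖L (EuclideanSpace.single 0 1)‖ = ‖L (EuclideanSpace.single 1 1)‖)
    (hinner : ⟪L (EuclideanSpace.single 0 1), L (EuclideanSpace.single 1 1)⟫ = 0) :
    ConformalHarmonicOnDisk fun z => x + L z := by
  have hpd : ∀ i, pd i (fun z => x + L z) = fun _ => L (EuclideanSpace.single i 1) := fun i => by
    ext1 z
    rw [pd, fderiv_const_add, L.fderiv]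
  refine ⟨(contDiff_const.add L.contDiff).contDiffOn, fun z _ => ?_, fun z _ => ?_⟩ <;>
    simp [hpd, hnorm, hinner]

/-- `v` is the derivative at the centre, in the first coordinate direction, of a conformal harmonic
disc in `D` centred at `x`. The minimal metric of `D` is the infimum of `1 / r` over the `r > 0` for
which `r • v` is such a derivative. -/
def IsDiscDerivative (D : Set (Euc d)) (x v : Euc d) : Prop :=
  ∃ f : Euc 2 → Euc d, ConformalHarmonicOnDisk f ∧ (∀ z ∈ unitDisk, f z ∈ D) ∧
    f 0 = x ∧ pd 0 f 0 = v

theorem isDiscDerivative_of_forall_add_mem {w : Euc d} (hnorm : ‖w‖ = ‖v‖) (hinner : ⟪v, w⟫ = 0)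
    (hD : ∀ s t : ℝ, s ^ 2 + t ^ 2 < 1 → x + (s • v + t • w) ∈ D) : IsDiscDerivative D x v := by
  set L : Euc 2 →L[ℝ] Euc d := (EuclideanSpace.proj 0 : Euc 2 →L[ℝ] ℝ).smulRight v +
    (EuclideanSpace.proj 1 : Euc 2 →L[ℝ] ℝ).smulRight w
  refine ⟨fun z => x + L z, conformalHarmonicOnDisk_const_add x (by simp [L, hnorm])
    (by simp [L, hinner]), fun z hz => hD (z 0) (z 1) ?_, by simp, ?_⟩
  · rw [unitDisk, mem_ball_zero_iff, ← sq_lt_one_iff₀ (norm_nonneg z),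
      EuclideanSpace.norm_sq_eq] at hz
    simpa [Fin.sum_univ_two] using hz
  · rw [pd, fderiv_const_add, L.fderiv]
    simp [L]

theorem minMetric_le_div {F a : ℝ} (hF : 0 ≤ F) (ha : 0 < a)
    (h : ∀ r > 0, r * F ≤ a → IsDiscDerivative D x (r • v)) : minMetric D x v ≤ F / a := by
  -- `F` may vanish, so compare with `F / a + t` for every `t > 0`.
  refine le_of_forall_pos_le_add fun t ht => csInf_le ⟨0, ?_⟩
    ⟨a / (F + a * t), by positivity, ?_, h _ (by positivity) ?_⟩
  · rintro _ ⟨r, hr, rfl, -⟩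
    positivity
  · field_simp
  · rw [div_mul_eq_mul_div, div_le_iff₀ (by positivity)]
    gcongr
    linarith [mul_pos ha ht]

theorem div_le_minMetric {F C r₀ : ℝ} (hC : 0 < C) (hr₀ : 0 < r₀)
    (hne : IsDiscDerivative D x (r₀ • v))
    (h : ∀ r > 0, IsDiscDerivative D x (r • v) → r * F ≤ C) : F / C ≤ minMetric D x v := by
  refine le_csInf ⟨_, r₀, hr₀, rfl, hne⟩ ?_
  rintro _ ⟨r, hr, rfl, hf⟩
  rw [div_le_div_iff₀ hC hr, one_mul, mul_comm]
  exact h r hr hf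

end EuclideanDiscs

/-! ### Boundary estimates -/

section Estimates

variable {d : ℕ} {D U : Set (Euc d)} {u : Euc d → ℝ} {x p v : Euc d} {δ R a : ℝ}

theorem norm_nvec (hxp : x ≠ p) : ‖nvec x p‖ = 1 := by
  rw [nvec, norm_smul, norm_inv, norm_norm,
    inv_mul_cancel₀ (norm_ne_zero_iff.2 (sub_ne_zero.2 hxp.symm))]

theorem sub_eq_dist_smul_nvec (x p : Euc d) : p - x = dist x p • nvec x p := by
  rcases eq_or_ne x p with rfl | hxp
  · simp
  · rw [nvec, dist_eq_norm', smul_inv_smul₀ (norm_ne_zero_iff.2 (sub_ne_zero.2 hxp.symm))]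

theorem norm_vN (hn : ‖nvec x p‖ = 1) (v : Euc d) : ‖vN x p v‖ = |⟪nvec x p, v⟫| := by
  rw [vN, norm_smul, hn, mul_one, Real.norm_eq_abs, real_inner_comm]

theorem norm_vT_le (hn : ‖nvec x p‖ = 1) (v : Euc d) : ‖vT x p v‖ ≤ ‖v‖ := by
  refine le_of_sq_le_sq ?_ (norm_nonneg _)
  rw [vT, vN, norm_sub_sq_real, real_inner_smul_right, norm_smul, hn, mul_one,
    Real.norm_eq_abs, sq_abs]
  linarith [sq_nonneg ⟪v, nvec x p⟫]

theorem norm_le_norm_vN_add_norm_vT (x p v : Euc d) : ‖v‖ ≤ ‖vN x p v‖ + ‖vT x p v‖ :=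
  calc ‖v‖ = ‖vN x p v + vT x p v‖ := by rw [vT, add_sub_cancel]
    _ ≤ _ := norm_add_le _ _

/-- The model for the minimal metric at a point `x` at distance `δ` from the boundary, where `p` is
the boundary point nearest to `x`. -/
def boundaryMetric (δ : ℝ) (x p v : Euc d) : ℝ := ‖vN x p v‖ / (2 * δ) + ‖vT x p v‖ / √δ

theorem boundaryMetric_nonneg (hδ : 0 ≤ δ) (x p v : Euc d) : 0 ≤ boundaryMetric δ x p v := by
  unfold boundaryMetric
  positivity

theorem boundaryMetric_smul {r : ℝ} (hr : 0 ≤ r) (δ : ℝ) (x p v : Euc d) :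
    boundaryMetric δ x p (r • v) = r * boundaryMetric δ x p v := by
  have hN : vN x p (r • v) = r • vN x p v := by
    rw [vN, vN, real_inner_smul_left, mul_smul]
  have hT : vT x p (r • v) = r • vT x p v := by rw [vT, vT, hN, smul_sub]
  rw [boundaryMetric, hN, hT, norm_smul, norm_smul, Real.norm_of_nonneg hr, boundaryMetric]
  ring

theorem norm_vN_le_of_boundaryMetric_le (hδ : 0 < δ) (h : boundaryMetric δ x p v ≤ a) :
    ‖vN x p v‖ ≤ a * (2 * δ) :=
  (div_le_iff₀ (by positivity)).1 ((le_add_of_nonneg_right (by positivity)).trans h)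

theorem norm_vT_le_of_boundaryMetric_le (hδ : 0 < δ) (h : boundaryMetric δ x p v ≤ a) :
    ‖vT x p v‖ ≤ a * √δ :=
  (div_le_iff₀ (by positivity)).1 ((le_add_of_nonneg_left (by positivity)).trans h)

/-- The affine disc `x + s • v + t • w`, with `w` orthogonal to both `v` and the normal at `p`,
moves in the normal direction no more than `v` does, so it stays in the ball tangent at `p`. -/
theorem isDiscDerivative_of_boundaryMetric_le (hd : 3 ≤ d) (hxp : x ≠ p)
    (hball : ball (p - R • nvec x p) R ⊆ D) (hR1 : R ≤ 1) (hxR : dist x p ≤ R)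
    (h : boundaryMetric (dist x p) x p v ≤ R / 8) : IsDiscDerivative D x v := by
  obtain ⟨w, hwv, hvw, hnw⟩ := exists_orthogonal (by simpa using hd) v (nvec x p)
  have hn := norm_nvec hxp
  have hx := sub_eq_dist_smul_nvec x p
  have hδ : 0 < dist x p := dist_pos.2 hxp
  set n := nvec x p
  set δ := dist x p
  have hN := norm_vN_le_of_boundaryMetric_le hδ h
  have hT := norm_vT_le_of_boundaryMetric_le hδ h
  have hR : 0 < R := hδ.trans_le hxR
  have hδsqrt : δ ≤ √δ := Real.le_sqrt_of_sq_le (by nlinarith)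
  have hv : ‖v‖ ≤ R / 8 * (3 * √δ) :=
    (norm_le_norm_vN_add_norm_vT x p v).trans (by nlinarith)
  refine isDiscDerivative_of_forall_add_mem hwv hvw fun s t hst => ?_
  have hnormal : ⟪n, s • v + t • w⟫ ≤ R / 8 * (2 * δ) := by
    have hs : |s| ≤ 1 := abs_le_one_iff_mul_self_le_one.2 (by nlinarith)
    calc ⟪n, s • v + t • w⟫ = s * ⟪n, v⟫ := by
          rw [inner_add_right, real_inner_smul_right, real_inner_smul_right, hnw, mul_zero,
            add_zero]
      _ ≤ |s| * |⟪n, v⟫| := (le_abs_self _).trans (abs_mul _ _).le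
      _ ≤ 1 * ‖vN x p v‖ := by rw [norm_vN hn]; gcongr
      _ ≤ R / 8 * (2 * δ) := by rwa [one_mul]
  have hnorm : ‖s • v + t • w‖ ^ 2 ≤ (R / 8 * 3) ^ 2 * δ := calc
    ‖s • v + t • w‖ ^ 2 = (s ^ 2 + t ^ 2) * ‖v‖ ^ 2 := norm_smul_add_smul_sq hwv hvw s t
    _ ≤ 1 * (R / 8 * (3 * √δ)) ^ 2 := by gcongr
    _ = (R / 8 * 3) ^ 2 * δ := by rw [← mul_assoc, mul_pow _ √δ, Real.sq_sqrt hδ.le, one_mul]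
  rw [show x = p - δ • n by rw [← hx, sub_sub_cancel]]
  refine hball (sub_add_mem_ball hn hR ?_)
  calc 2 * (R - δ) * ⟪n, s • v + t • w⟫ + ‖s • v + t • w‖ ^ 2
      ≤ 2 * (R - δ) * (R / 8 * (2 * δ)) + (R / 8 * 3) ^ 2 * δ := by gcongr
    _ = δ * (R * (R / 2 + 9 * R / 64 - δ / 2)) := by ring
    _ < δ * (2 * R - δ) := by gcongr; nlinarith

theorem IsDiscDerivative.exists_isConformalHarmonicOn (h : IsDiscDerivative D x v) :
    ∃ f : ℂ → Euc d, IsConformalHarmonicOn f (ball 0 1) ∧ MapsTo f (ball 0 1) D ∧ f 0 = x ∧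
      fderiv ℝ f 0 1 = v := by
  obtain ⟨f, hf, hfD, hf0, hfv⟩ := h
  refine ⟨f ∘ planeIso, isConformalHarmonicOn_comp_planeIso hf,
    fun z hz => hfD _ (planeIso_mem_unitDisk hz), by simpa using hf0, ?_⟩
  rw [fderiv_comp_planeIso_apply_one, map_zero, hfv]

theorem IsDiscDerivative.boundaryMetric_le {κ ρ L B s : ℝ} (hv : IsDiscDerivative D x v)
    (hball : HasTwoSidedBall D p (nvec x p) R) (hxp : x ≠ p) (hxρ : dist x p ≤ ρ / 2)
    (hu : StronglyMinimallyPSHOn u κ (closedBall p ρ)) (hκ : 0 < κ)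
    (hneg : ∀ y ∈ D ∩ closedBall p ρ, u y ≤ 0) (hL : -u x ≤ L * dist x p) (hB : 0 < B)
    (hDB : ∀ y ∈ D, dist y x ≤ B) (hs : 0 < s) (hs' : s ≤ 1 / 2) (hsB : 8 * B * s ≤ ρ) :
    boundaryMetric (dist x p) x p v ≤ 2 / s + 2 * L / (R * κ * s) + √(8 * L / (κ * s ^ 2)) := by
  obtain ⟨f, hf, hfD, rfl, rfl⟩ := hv.exists_isConformalHarmonicOn
  have hn := hball.norm_eq_one
  have hx := sub_eq_dist_smul_nvec (f 0) p
  have hδ : 0 < dist (f 0) p := dist_pos.2 hxp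
  have hR := hball.pos
  have hs1 : s < 1 := by linarith
  have hfρ : MapsTo f (closedBall 0 s) (closedBall p ρ) :=
    mapsTo_closedBall_of_harmonicOnNhd_ball hf.harmonicOnNhd hB
      (fun z hz => dist_eq_norm (f z) (f 0) ▸ hDB _ (hfD hz)) hs' hsB hxρ
  set n := nvec (f 0) p
  set δ := dist (f 0) p
  have hN : ‖vN (f 0) p (fderiv ℝ f 0 1)‖ ≤ (2 / s + 2 * L / (R * κ * s)) * (2 * δ) := calc
    ‖vN (f 0) p (fderiv ℝ f 0 1)‖ ≤ 4 * δ / s + 4 / (R * κ * s) * -u (f 0) := by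
      rw [norm_vN hn]
      exact hball.abs_inner_fderiv_le hu hκ hneg hs hs1 hf hfD hfρ hδ.le hx
    _ ≤ 4 * δ / s + 4 / (R * κ * s) * (L * δ) := by gcongr
    _ = (2 / s + 2 * L / (R * κ * s)) * (2 * δ) := by ring
  have hT : ‖vT (f 0) p (fderiv ℝ f 0 1)‖ ≤ √(8 * L / (κ * s ^ 2)) * √δ := by
    refine (norm_vT_le hn _).trans ?_
    rw [← Real.sqrt_mul' _ hδ.le]
    refine Real.le_sqrt_of_sq_le ?_
    have := (hu.mul_norm_fderiv_sq_le hκ.le hf hs hs1 hfρ fun z hz => hneg _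
      ⟨hfD (closedBall_subset_ball hs1 (sphere_subset_closedBall hz)),
        hfρ (sphere_subset_closedBall hz)⟩).trans hL
    rw [div_mul_eq_mul_div, le_div_iff₀ (by positivity)]
    linarith
  unfold boundaryMetric
  gcongr
  · exact (div_le_iff₀ (by positivity)).2 hN
  · exact (div_le_iff₀ (by positivity)).2 hT

theorem ne_of_mem_of_mem_frontier (hD : IsOpen D) (hx : x ∈ D) (hp : p ∈ frontier D) : x ≠ p :=
  ne_of_mem_of_not_mem hx (hD.frontier_eq ▸ hp).2

theorem HasTwoSidedBall.of_dist_eq_infDist {n : Euc d} (h : HasTwoSidedBall D p n R)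
    (hD : IsOpen D) (hx : x ∈ D) (hp : p ∈ frontier D)
    (hxp : dist x p = infDist x (frontier D)) : HasTwoSidedBall D p (nvec x p) R := by
  have hne := ne_of_mem_of_mem_frontier hD hx hp
  have hn := h.sub_eq_dist_smul hne (hxp ▸ ball_infDist_frontier_subset hD hx)
  rw [sub_eq_dist_smul_nvec] at hn
  rwa [smul_right_injective _ (dist_pos.2 hne).ne' hn]

theorem exists_forall_boundaryMetric_le (hD : IsOpen D) (hDb : Bornology.IsBounded D)
    (hu : IsDefiningFunction D U u)
    (hpos : ∀ x ∈ U, ∀ v w : Euc d, ‖v‖ = 1 → ‖w‖ = 1 → ⟪v, w⟫ = 0 →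
      0 < fderiv ℝ (fderiv ℝ u) x v v + fderiv ℝ (fderiv ℝ u) x w w) {ρ : ℝ} (hρ : 0 < ρ)
    (hρU : cthickening ρ (frontier D) ⊆ U) (hR : 0 < R)
    (hball : ∀ p ∈ frontier D, ∃ n, HasTwoSidedBall D p n R) :
    ∃ C > 0, ∀ x ∈ D, ∀ p ∈ frontier D, dist x p = infDist x (frontier D) → dist x p ≤ ρ / 2 →
      ∀ v, IsDiscDerivative D x v → boundaryMetric (dist x p) x p v ≤ C := by
  have hK : IsCompact (cthickening ρ (frontier D)) := IsCompact.cthickening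
    (isCompact_of_isClosed_isBounded isClosed_frontier (hDb.closure.subset frontier_subset_closure))
  obtain ⟨κ, hκ, hpsh⟩ := exists_stronglyMinimallyPSHOn_of_isCompact hK
    (fun y hy => hu.contDiffAt (hρU hy)) fun y hy => hpos y (hρU hy)
  obtain ⟨L, hL⟩ := exists_lipschitzOnWith_of_isCompact_of_contDiffAt hK
    fun y hy => (hu.contDiffAt (hρU hy)).of_le one_le_two
  obtain ⟨B, hB, hDB⟩ := (isBounded_iff_exists_ge 1).1 hDb
  set s := min (1 / 2) (ρ / (8 * B))
  have hs : 0 < s := by positivity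
  have hsB : 8 * B * s ≤ ρ := by
    rw [mul_comm, ← le_div_iff₀ (by positivity)]
    exact min_le_right _ _
  refine ⟨2 / s + 2 * L / (R * κ * s) + √(8 * L / (κ * s ^ 2)), by positivity,
    fun x hx p hp hxp hxρ v hv => ?_⟩
  obtain ⟨n, hn⟩ := hball p hp
  have hpK : closedBall p ρ ⊆ cthickening ρ (frontier D) := closedBall_subset_cthickening hp ρ
  refine hv.boundaryMetric_le (hn.of_dist_eq_infDist hD hx hp hxp)
    (ne_of_mem_of_mem_frontier hD hx hp) hxρ (hpsh.mono hpK) hκ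
    (fun y hy => ((hu.mem_iff (hρU (hpK hy.2))).1 hy.1).le) ?_ (by positivity)
    (fun y hy => hDB hy hx) hs (min_le_left _ _) hsB
  have := hL.dist_le_mul x (hpK (mem_closedBall.2 (by linarith))) p
    (hpK (mem_closedBall_self hρ.le))
  rw [hu.eq_zero hp, Real.dist_0_eq_abs] at this
  exact (neg_le_abs _).trans this

theorem minMetric_bounds_of_boundaryMetric_bounds {C : ℝ} (hδ : 0 ≤ δ) (ha : 0 < a) (hC : 0 < C)
    (hupper : ∀ v, boundaryMetric δ x p v ≤ a → IsDiscDerivative D x v)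
    (hlower : ∀ v, IsDiscDerivative D x v → boundaryMetric δ x p v ≤ C) (v : Euc d) :
    boundaryMetric δ x p v / C ≤ minMetric D x v ∧
      minMetric D x v ≤ boundaryMetric δ x p v / a := by
  have hF := boundaryMetric_nonneg hδ x p v
  have hdisc : ∀ r > 0, r * boundaryMetric δ x p v ≤ a → IsDiscDerivative D x (r • v) :=
    fun r hr h => hupper _ (by rwa [boundaryMetric_smul hr.le])
  have hr₀ : 0 < a / (boundaryMetric δ x p v + 1) := by positivity
  refine ⟨div_le_minMetric hC hr₀ (hdisc _ hr₀ ?_) fun r hr h => ?_, minMetric_le_div hF ha hdisc⟩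
  · rw [div_mul_eq_mul_div, div_le_iff₀ (by positivity)]
    gcongr
    linarith
  · rw [← boundaryMetric_smul hr.le]
    exact hlower _ h

theorem exists_forall_minMetric_bounds (hd : 3 ≤ d) (hD : IsOpen D) (hDb : Bornology.IsBounded D)
    (hu : IsDefiningFunction D U u)
    (hpos : ∀ x ∈ U, ∀ v w : Euc d, ‖v‖ = 1 → ‖w‖ = 1 → ⟪v, w⟫ = 0 →
      0 < fderiv ℝ (fderiv ℝ u) x v v + fderiv ℝ (fderiv ℝ u) x w w) :
    ∃ ε > 0, ∃ a > 0, ∃ C > 0, ∀ x ∈ D, ∀ p ∈ frontier D, dist x p = infDist x (frontier D) →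
      dist x p ≤ ε → ∀ v, boundaryMetric (dist x p) x p v / C ≤ minMetric D x v ∧
        minMetric D x v ≤ boundaryMetric (dist x p) x p v / a := by
  have hfr : IsCompact (frontier D) := isCompact_of_isClosed_isBounded isClosed_frontier
    (hDb.closure.subset frontier_subset_closure)
  obtain ⟨ρ, hρ, hρU⟩ := hfr.exists_cthickening_subset_open hu.isOpen hu.frontier_subset
  obtain ⟨R, hR, hR1, hball⟩ := hu.exists_forall_hasTwoSidedBall hfr hρ hρU
  obtain ⟨C, hC, hlower⟩ := exists_forall_boundaryMetric_le hD hDb hu hpos hρ hρU hR hball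
  refine ⟨min R (ρ / 2), by positivity, R / 8, by positivity, C, hC, fun x hx p hp hxp hxε v => ?_⟩
  obtain ⟨hxR, hxρ⟩ := le_min_iff.1 hxε
  obtain ⟨n, hn⟩ := hball p hp
  have hball_subset := (hn.of_dist_eq_infDist hD hx hp hxp).ball_subset
  have hne := ne_of_mem_of_mem_frontier hD hx hp
  exact minMetric_bounds_of_boundaryMetric_bounds dist_nonneg (by positivity) hC
    (fun v => isDiscDerivative_of_boundaryMetric_le hd hne hball_subset hR1 hxR)
    (hlower x hx p hp hxp hxρ) v

end Estimates

end MinimalMetric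

theorem minimal_metric_boundary_estimates_general {d : ℕ} (hd : 3 ≤ d) {D U : Set (Euc d)}
    {u : Euc d → ℝ} (hD : IsOpen D) (hDb : Bornology.IsBounded D)
    (hu : MinimalMetric.IsDefiningFunction D U u)
    (hpos : ∀ x ∈ U, ∀ v w : Euc d, ‖v‖ = 1 → ‖w‖ = 1 → ⟪v, w⟫ = 0 →
      0 < hessQ u x v + hessQ u x w) :
    ∃ ε : ℝ, 0 < ε ∧ ε < 1 ∧ ∃ A : ℝ, 1 ≤ A ∧
      ∀ x ∈ D, infDist x (frontier D) < ε →
        ∀ p ∈ frontier D, dist x p = infDist x (frontier D) → ∀ v : Euc d,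
          A⁻¹ * (‖vN x p v‖ / (2 * infDist x (frontier D))
              + ‖vT x p v‖ / √(infDist x (frontier D))) ≤ minMetric D x v ∧
            minMetric D x v ≤ A * (‖vN x p v‖ / (2 * infDist x (frontier D))
              + ‖vT x p v‖ / √(infDist x (frontier D))) := by
  have hpos' : ∀ x ∈ U, ∀ v w : Euc d, ‖v‖ = 1 → ‖w‖ = 1 → ⟪v, w⟫ = 0 →
      0 < fderiv ℝ (fderiv ℝ u) x v v + fderiv ℝ (fderiv ℝ u) x w w := fun x hx => by
    simpa only [hessQ, MinimalMetric.fderiv_fderiv_const_apply (hu.contDiffAt hx)] using hpos x hx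
  obtain ⟨ε, hε, a, -, C, hC, hbounds⟩ :=
    MinimalMetric.exists_forall_minMetric_bounds hd hD hDb hu hpos'
  refine ⟨min (1 / 2) ε, by positivity, (min_le_left _ _).trans_lt (by norm_num),
    max 1 (max C a⁻¹), le_max_left _ _, fun x hx hxε p hp hxp v => ?_⟩
  rw [← hxp] at hxε ⊢
  obtain ⟨hlower, hupper⟩ := hbounds x hx p hp hxp (hxε.le.trans (min_le_right _ _)) v
  rw [div_eq_inv_mul] at hlower hupper
  have hF := MinimalMetric.boundaryMetric_nonneg (dist_nonneg (x := x) (y := p)) x p v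
  exact ⟨(mul_le_mul_of_nonneg_right
      (inv_anti₀ hC ((le_max_left _ _).trans (le_max_right _ _))) hF).trans hlower,
    hupper.trans (mul_le_mul_of_nonneg_right ((le_max_right _ _).trans (le_max_right _ _)) hF)⟩

/-- Boundary estimates for the minimal metric of a bounded strongly
minimally convex domain: `g_D(x,v) ≍ ‖v_N‖/(2δ_D(x)) + ‖v_T‖/δ_D(x)^{1/2}` near `∂D`,
where `p = π(x)` is the (unique) nearest boundary point of `x`. -/
theorem minimal_metric_boundary_estimates
    (d : ℕ) (hd : 3 ≤ d) (D : Set (Euc d)) (hD : IsStronglyMinimallyConvex D) :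
    ∃ ε : ℝ, 0 < ε ∧ ε < 1 ∧ ∃ A : ℝ, 1 ≤ A ∧
      ∀ x ∈ D, Metric.infDist x (frontier D) < ε →
        ∀ p ∈ frontier D, dist x p = Metric.infDist x (frontier D) →
          ∀ v : Euc d,
            A⁻¹ * (‖vN x p v‖ / (2 * Metric.infDist x (frontier D))
                + ‖vT x p v‖ / Real.sqrt (Metric.infDist x (frontier D)))
              ≤ minMetric D x v ∧
            minMetric D x v ≤
              A * (‖vN x p v‖ / (2 * Metric.infDist x (frontier D))
                + ‖vT x p v‖ / Real.sqrt (Metric.infDist x (frontier D))) := by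
  obtain ⟨hDo, -, hDb, U, u, hU, -, hu, hDU, hfr, hdu, hpos⟩ := hD
  exact minimal_metric_boundary_estimates_general hd hDo hDb ⟨hU, hu, hDU, hfr, hdu⟩ hpos
end
end

section
/- Let d ≥ 2 and let D ⊂ ℝ^d be a bounded domain with C² boundary, and let ε ∈ (0,1) be small enough that the nearest-point projection π is well defined on N_ε(∂D) and the tangential comparison (1/2)‖γ̇_T‖ ≤ ‖(π∘γ)'‖ ≤ 2‖γ̇_T‖ holds there. Set N := closure(N_ε(∂D)) ∩ D, h(x) := δ_D(x)^{1/2}, and for a piecewise C¹ curve γ : [0,1] → N define ℓ(γ) := ∫₀¹ (‖(γ̇(t))_N‖/(2δ_D(γ(t))) + ‖(γ̇(t))_T‖/δ_D(γ(t))^{1/2}) dt. Then for every piecewise C¹ curve γ : [0,1] → N with endpoints x = γ(0) and y = γ(1): ℓ(γ) ≥ |log(h(y)/h(x))| + H(π(x),π(y))/(2 h_γ), where h_γ := max_{t∈[0,1]} h(γ(t)). Moreover, if γ is a straight line segment contained in the normal fiber π^{-1}(ξ) for some ξ ∈ ∂D, then ℓ(γ) = |log(h(y)/h(x))|. -/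
/-!
The foot `p = π x` of a point `x` minimizes the distance to a level set of the defining function
`u`, so by Lagrange multipliers `x = p - r ∇u(p)`: away from focal points, `p` is a `C¹` function
of `x` by the inverse function theorem for `(q, r) ↦ (q - r ∇u(q), u q)`. The lower half of the
tangential comparison rules out focal points, since it forces `π` to be differentiable along enough
curves for the differential of this map to be surjective. Hence `π` is `C¹` on the tube, and
`π ∘ γ` competes in the definition of `H`; by the upper half of the comparison its length is at
most `2 h_γ` times the tangential part of `ℓ(γ)`.

The squared distance `δ_D²` has differential `2⟪x - π x, ·⟫`, so the normal part of `ℓ(γ)` is the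
integral of `|(log h ∘ γ)'|`. On a segment in a normal fiber the tangential part vanishes and
`(log h ∘ γ)'` has constant sign.
-/

open scoped RealInnerProductSpace ENNReal
open Metric Set Filter

noncomputable section

open scoped Topology Gradient

section MetricProjection

variable {X : Type*} [PseudoMetricSpace X] {π : X → X} {F S : Set X} {x : X}

/-- `π` sends every point of `S` to its unique nearest point in `F`. -/
structure IsMetricProjectionOn (π : X → X) (F S : Set X) : Prop where
  mem : ∀ x ∈ S, π x ∈ F
  dist_eq : ∀ x ∈ S, dist x (π x) = infDist x F
  eq_of_dist_eq : ∀ x ∈ S, ∀ q ∈ F, dist x q = infDist x F → q = π x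

theorem IsMetricProjectionOn.continuousOn (hπ : IsMetricProjectionOn π F S) (hF : IsCompact F) :
    ContinuousOn π S := by
  intro x hx
  refine hF.tendsto_nhds_of_unique_mapClusterPt
    (eventually_nhdsWithin_of_forall fun y hy ↦ hπ.mem y hy) fun q hq hcl ↦
      hπ.eq_of_dist_eq x hx q hq ?_
  obtain ⟨V, hV, hVq⟩ := mapClusterPt_iff_ultrafilter.1 hcl
  have hVx : Tendsto id (V : Filter X) (𝓝 x) := hV.trans nhdsWithin_le_nhds
  refine tendsto_nhds_unique_of_eventuallyEq (hVx.dist hVq)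
    (((continuous_infDist_pt F).tendsto x).comp hVx) ?_
  filter_upwards [hV self_mem_nhdsWithin] with y hy using hπ.dist_eq y hy

end MetricProjection

section SqDist

variable {E : Type*} [NormedAddCommGroup E] [InnerProductSpace ℝ E] {π : E → E} {F S : Set E}
  {x : E}

theorem IsMetricProjectionOn.abs_infDist_sq_sub_le (hπ : IsMetricProjectionOn π F S) {y : E}
    (hx : x ∈ S) (hy : y ∈ S) :
    |infDist y F ^ 2 - infDist x F ^ 2 - 2 * ⟪x - π x, y - x⟫| ≤
      (‖y - x‖ + 2 * ‖π y - π x‖) * ‖y - x‖ := by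
  have infDist_eq : ∀ z ∈ S, infDist z F = ‖z - π z‖ := fun z hz ↦ by
    rw [← hπ.dist_eq z hz, dist_eq_norm]
  have infDist_sq_le : ∀ w, ∀ z ∈ S, infDist w F ^ 2 ≤ ‖w - π z‖ ^ 2 := fun w z hz ↦
    pow_le_pow_left₀ infDist_nonneg
      (by simpa only [dist_eq_norm] using infDist_le_dist_of_mem (hπ.mem z hz)) 2
  have upper := infDist_sq_le y x hx
  have lower := infDist_sq_le x y hy
  have expand_upper : ‖y - π x‖ ^ 2 = ‖x - π x‖ ^ 2 + 2 * ⟪x - π x, y - x⟫ + ‖y - x‖ ^ 2 := by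
    rw [← norm_add_sq_real, sub_add_sub_comm, add_comm x, add_sub_add_right_eq_sub]
  have expand_lower : ‖y - π y‖ ^ 2 = ‖x - π y‖ ^ 2 + 2 * ⟪x - π x, y - x⟫
      - 2 * ⟪π y - π x, y - x⟫ + ‖y - x‖ ^ 2 := by
    have split : ⟪x - π y, y - x⟫ = ⟪x - π x, y - x⟫ - ⟪π y - π x, y - x⟫ := by
      rw [← inner_sub_left, sub_sub_sub_cancel_right]
    rw [show y - π y = x - π y + (y - x) by abel, norm_add_sq_real, split]
    ring
  have cauchy_schwarz : |⟪π y - π x, y - x⟫| ≤ ‖π y - π x‖ * ‖y - x‖ :=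
    abs_real_inner_le_norm _ _
  rw [infDist_eq x hx] at lower ⊢
  rw [infDist_eq y hy] at upper ⊢
  rw [abs_le]
  constructor <;> nlinarith [abs_le.1 cauchy_schwarz, sq_nonneg ‖y - x‖,
    mul_nonneg (norm_nonneg (π y - π x)) (norm_nonneg (y - x))]

/-- Danskin's argument: `infDist² y ≤ ‖y - π x‖²` and `infDist² x ≤ ‖x - π y‖²` squeeze the
increment of `infDist²` between two expressions with the same first-order part. -/
theorem IsMetricProjectionOn.hasFDerivWithinAt_infDist_sq (hπ : IsMetricProjectionOn π F S)
    (hx : x ∈ S) (hc : ContinuousWithinAt π S x) :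
    HasFDerivWithinAt (fun y ↦ infDist y F ^ 2) (2 • innerSL ℝ (x - π x)) S x := by
  refine .of_isLittleO ?_
  have small : Tendsto (fun y ↦ ‖y - x‖ + 2 * ‖π y - π x‖) (𝓝[S] x) (𝓝 0) := by
    have : ContinuousWithinAt (fun y ↦ ‖y - x‖ + 2 * ‖π y - π x‖) S x := by fun_prop
    simpa using this.tendsto
  have product_isLittleO : (fun y ↦ (‖y - x‖ + 2 * ‖π y - π x‖) * ‖y - x‖) =o[𝓝[S] x]
      fun y ↦ y - x := by
    simpa using ((Asymptotics.isLittleO_one_iff ℝ).2 small).mul_isBigO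
      (Asymptotics.isBigO_refl (fun y ↦ ‖y - x‖) (𝓝[S] x))
  refine Asymptotics.IsBigO.trans_isLittleO
    (.of_bound' (eventually_nhdsWithin_of_forall fun y hy ↦ ?_)) product_isLittleO
  simpa [mul_sub, inner_sub_left] using (hπ.abs_infDist_sq_sub_le hx hy).trans (le_abs_self _)

theorem eventually_dist_add_smul_le {p v : E} (hne : x ≠ p) (horth : ⟪p - x, v⟫ = 0) :
    ∀ᶠ r in 𝓝[≥] (0 : ℝ), dist (x + r • (v + (p - x))) p ≤ dist x p := by
  have hδ : 0 < ‖p - x‖ ^ 2 := by simpa [sub_eq_zero, sq_pos_iff] using hne.symm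
  have hcont : Continuous fun r : ℝ ↦ r * (‖v‖ ^ 2 + ‖p - x‖ ^ 2) := by fun_prop
  have small : ∀ᶠ r in 𝓝 (0 : ℝ), r * (‖v‖ ^ 2 + ‖p - x‖ ^ 2) < 2 * ‖p - x‖ ^ 2 :=
    hcont.continuousAt.eventually_lt_const (by simpa using hδ)
  filter_upwards [nhdsWithin_le_nhds small, self_mem_nhdsWithin] with r hr hr0
  have pythagoras : ‖x + r • (v + (p - x)) - p‖ ^ 2
      = (1 - r) ^ 2 * ‖p - x‖ ^ 2 + r ^ 2 * ‖v‖ ^ 2 := by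
    rw [show x + r • (v + (p - x)) - p = r • v - (1 - r) • (p - x) by module, norm_sub_sq_real,
      norm_smul, norm_smul, real_inner_smul_left, real_inner_smul_right, real_inner_comm, horth,
      mul_pow, mul_pow]
    simp
    ring
  rw [dist_eq_norm, dist_eq_norm, norm_sub_rev x]
  refine le_of_sq_le_sq ?_ (norm_nonneg _)
  rw [pythagoras]
  nlinarith [mul_le_mul_of_nonneg_left hr.le (mem_Ici.1 hr0)]

end SqDist

section LevelSet

variable {E : Type*} [NormedAddCommGroup E] [InnerProductSpace ℝ E] [CompleteSpace E]
  {u : E → ℝ} {p x : E}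

theorem exists_sub_eq_smul_gradient_of_isLocalMinOn_dist (hu : ContDiffAt ℝ 1 u p)
    (hne : ∇ u p ≠ 0) (hmin : IsLocalMinOn (dist x) {q | u q = u p} p) :
    ∃ s : ℝ, p - x = s • ∇ u p := by
  have hmin_sq : IsLocalMinOn (fun q ↦ ‖q - x‖ ^ 2) {q | u q = u p} p := by
    filter_upwards [hmin] with q hq
    simp only [dist_comm x, dist_eq_norm] at hq
    gcongr
  have hφ : HasStrictFDerivAt (fun q ↦ ‖q - x‖ ^ 2) (2 • innerSL ℝ (p - x)) p :=
    (hasStrictFDerivAt_norm_sq (p - x)).comp p ((hasStrictFDerivAt_id p).sub_const x)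
  obtain ⟨a, b, hab, h⟩ := IsLocalExtrOn.exists_multipliers_of_hasStrictFDerivAt_1d
    (.inl hmin_sq) (hu.hasStrictFDerivAt (by simp)) hφ
  have combination : a • ∇ u p + (2 * b) • (p - x) = 0 := by
    refine ext_inner_right ℝ fun v ↦ ?_
    have hv := DFunLike.congr_fun h v
    simp only [add_apply, smul_apply, coe_innerSL_apply, smul_eq_mul, nsmul_eq_mul,
      Nat.cast_ofNat, zero_apply] at hv
    simp only [inner_add_left, real_inner_smul_left, inner_gradient_left, inner_zero_left]
    linear_combination hv
  have hb : 2 * b ≠ 0 := by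
    intro hb
    simp_all
  refine ⟨(2 * b)⁻¹ * -a, ?_⟩
  rw [mul_smul, neg_smul, neg_eq_of_add_eq_zero_right combination, inv_smul_smul₀ hb]

end LevelSet

section LocalInverse

variable {E F G : Type*} [NormedAddCommGroup E] [NormedSpace ℝ E] [CompleteSpace E]
  [NormedAddCommGroup F] [NormedSpace ℝ F] [NormedAddCommGroup G] [NormedSpace ℝ G]
  {n : WithTop ℕ∞}

theorem contDiffWithinAt_of_comp {f : E → F} {f' : E ≃L[ℝ] F} {σ : G → E} {S : Set G} {z : G}
    (hn : n ≠ 0) (hf : ContDiffAt ℝ n f (σ z)) (hf' : HasFDerivAt f (f' : E →L[ℝ] F) (σ z))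
    (hσ : ContinuousWithinAt σ S z) (hfσ : ContDiffWithinAt ℝ n (f ∘ σ) S z) :
    ContDiffWithinAt ℝ n σ S z := by
  have hleft := (hf.hasStrictFDerivAt' hf' hn).eventually_left_inverse
  exact ((hf.to_localInverse hf' hn).comp_contDiffWithinAt z hfσ).congr_of_eventuallyEq
    ((hσ.eventually hleft).mono fun _ h ↦ h.symm) hleft.self_of_nhds.symm

end LocalInverse

section NormalCoordinates

variable {E : Type*} [NormedAddCommGroup E] [InnerProductSpace ℝ E] [CompleteSpace E]
  {u : E → ℝ} {p x : E}

/-- Normal coordinates along the level sets of `u`: `(q, r)` is sent to the point at parameter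
`-r` of the normal line `q + ℝ ∇u(q)`, paired with the level `u q`. -/
def normalMap (u : E → ℝ) (z : E × ℝ) : E × ℝ := (z.1 - z.2 • ∇ u z.1, u z.1)

/-- For `x` on the normal line through `p`, the coordinates at which `normalMap u` takes the
value `(x, u p)`; the formula is smooth in `(x, p)`, which transfers regularity from `p` to the
parameter on the normal line. -/
def normalCoord (u : E → ℝ) (x p : E) : E × ℝ := (p, ⟪∇ u p, p - x⟫ / ‖∇ u p‖ ^ 2)

theorem normalMap_normalCoord {s : ℝ} (hs : p - x = s • ∇ u p) :
    normalMap u (normalCoord u x p) = (x, u p) := by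
  have : (⟪∇ u p, p - x⟫ / ‖∇ u p‖ ^ 2) • ∇ u p = p - x := by
    rcases eq_or_ne (∇ u p) 0 with h | h
    · simp [hs, h]
    · rw [hs, real_inner_smul_right, real_inner_self_eq_norm_sq, mul_div_cancel_right₀]
      simpa using h
  rw [normalMap, normalCoord, this, sub_sub_cancel]

theorem contDiffAt_gradient {n : WithTop ℕ∞} (hu : ContDiffAt ℝ (n + 1) u p) :
    ContDiffAt ℝ n (∇ u) p :=
  (InnerProductSpace.toDual ℝ E).symm.contDiff.contDiffAt.comp p (hu.fderiv_right le_rfl)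

theorem contDiffAt_normalCoord {n : WithTop ℕ∞} (hu : ContDiffAt ℝ (n + 1) u p)
    (hne : ∇ u p ≠ 0) :
    ContDiffAt ℝ n (fun z : E × E ↦ normalCoord u z.1 z.2) (x, p) := by
  have hgrad : ContDiffAt ℝ n (fun z : E × E ↦ ∇ u z.2) (x, p) :=
    ContDiffAt.comp (x, p) (g := ∇ u) (f := Prod.snd) (contDiffAt_gradient hu) contDiffAt_snd
  exact contDiffAt_snd.prodMk ((hgrad.inner ℝ (contDiffAt_snd.sub contDiffAt_fst)).div
    (hgrad.norm_sq ℝ) (by simpa using hne))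

theorem contDiffAt_normalMap {n : WithTop ℕ∞} {z : E × ℝ} (hu : ContDiffAt ℝ (n + 1) u z.1) :
    ContDiffAt ℝ n (normalMap u) z :=
  (contDiffAt_fst.sub (contDiffAt_snd.smul ((contDiffAt_gradient hu).comp z contDiffAt_fst))).prodMk
    ((hu.of_le le_self_add).comp z contDiffAt_fst)

theorem fderiv_normalMap_apply {z : E × ℝ} (hu : ContDiffAt ℝ 2 u z.1) (w : E × ℝ) :
    fderiv ℝ (normalMap u) z w =
      (w.1 - (z.2 • fderiv ℝ (∇ u) z.1 w.1 + w.2 • ∇ u z.1), ⟪∇ u z.1, w.1⟫) := by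
  have hgrad : HasFDerivAt (fun z : E × ℝ ↦ ∇ u z.1)
      ((fderiv ℝ (∇ u) z.1).comp (.fst ℝ E ℝ)) z :=
    ((contDiffAt_gradient (n := 1) hu).differentiableAt one_ne_zero).hasFDerivAt.comp z
      hasFDerivAt_fst
  have hval : HasFDerivAt (fun z : E × ℝ ↦ u z.1) ((fderiv ℝ u z.1).comp (.fst ℝ E ℝ)) z :=
    (hu.differentiableAt two_ne_zero).hasFDerivAt.comp z hasFDerivAt_fst
  have : HasFDerivAt (normalMap u) _ z :=
    (hasFDerivAt_fst.sub (hasFDerivAt_snd.smul hgrad)).prodMk hval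
  rw [this.fderiv]
  simp

theorem gradient_mem_range_fderiv_normalMap {z : E × ℝ} (hu : ContDiffAt ℝ 2 u z.1) :
    (∇ u z.1, (0 : ℝ)) ∈ (fderiv ℝ (normalMap u) z).range :=
  ⟨(0, -1), by simp [fderiv_normalMap_apply hu]⟩

theorem surjective_fderiv_normalMap_of_tangent {z : E × ℝ} (hu : ContDiffAt ℝ 2 u z.1)
    (hne : ∇ u z.1 ≠ 0)
    (htangent : ∀ v, ⟪∇ u z.1, v⟫ = 0 → (v, (0 : ℝ)) ∈ (fderiv ℝ (normalMap u) z).range) :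
    Function.Surjective (fderiv ℝ (normalMap u) z) := by
  set L := fderiv ℝ (normalMap u) z
  set g := ∇ u z.1
  have hnorm : ‖g‖ ^ 2 ≠ 0 := by simpa using hne
  have level_zero_mem : ∀ v, (v, (0 : ℝ)) ∈ L.range := fun v ↦ by
    have horth : ⟪g, v - (⟪g, v⟫ / ‖g‖ ^ 2) • g⟫ = 0 := by
      rw [inner_sub_right, real_inner_smul_right, real_inner_self_eq_norm_sq,
        div_mul_cancel₀ _ hnorm, sub_self]
    have := L.range.add_mem (htangent _ horth) (L.range.smul_mem (⟪g, v⟫ / ‖g‖ ^ 2)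
      (gradient_mem_range_fderiv_normalMap hu))
    rwa [Prod.smul_mk, Prod.mk_add_mk, sub_add_cancel, smul_zero, add_zero] at this
  rintro ⟨v, c⟩
  set w : E × ℝ := ((c / ‖g‖ ^ 2) • g, 0)
  have hw : (L w).2 = c := by
    simp only [L, w, fderiv_normalMap_apply hu, real_inner_smul_right,
      real_inner_self_eq_norm_sq, g]
    exact div_mul_cancel₀ _ hnorm
  obtain ⟨w', hw'⟩ := level_zero_mem (v - (L w).1)
  refine ⟨w' + w, ?_⟩
  have : L w' = (v - (L w).1, 0) := hw'
  rw [map_add, this]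
  ext <;> simp [hw]

end NormalCoordinates

section RegularDefiningFunction

variable {E : Type*} [NormedAddCommGroup E] [InnerProductSpace ℝ E] [CompleteSpace E]
  {u : E → ℝ} {π : E → E} {F S : Set E} {x : E}

/-- `u` is `C²` near `F` with nonvanishing gradient on `F`, and `F` is locally the zero set of
`u`. -/
structure IsRegularDefiningFunction (u : E → ℝ) (F : Set E) : Prop where
  contDiffAt : ∀ p ∈ F, ContDiffAt ℝ 2 u p
  gradient_ne_zero : ∀ p ∈ F, ∇ u p ≠ 0
  eventually_mem_iff : ∀ p ∈ F, ∀ᶠ q in 𝓝 p, q ∈ F ↔ u q = 0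

namespace IsRegularDefiningFunction

theorem eq_zero (hu : IsRegularDefiningFunction u F) {p : E} (hp : p ∈ F) : u p = 0 :=
  (hu.eventually_mem_iff p hp).self_of_nhds.1 hp

theorem exists_proj_sub_eq_smul_gradient (hu : IsRegularDefiningFunction u F)
    (hπ : IsMetricProjectionOn π F S) (hx : x ∈ S) : ∃ s : ℝ, π x - x = s • ∇ u (π x) := by
  have hp := hπ.mem x hx
  refine exists_sub_eq_smul_gradient_of_isLocalMinOn_dist
    ((hu.contDiffAt _ hp).of_le one_le_two) (hu.gradient_ne_zero _ hp) ?_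
  filter_upwards [nhdsWithin_le_nhds (hu.eventually_mem_iff _ hp), self_mem_nhdsWithin]
    with q hq hlevel
  rw [hπ.dist_eq x hx]
  exact infDist_le_dist_of_mem (hq.2 (hlevel.trans (hu.eq_zero hp)))

theorem normalMap_normalCoord_proj (hu : IsRegularDefiningFunction u F)
    (hπ : IsMetricProjectionOn π F S) (hx : x ∈ S) :
    normalMap u (normalCoord u x (π x)) = (x, 0) := by
  obtain ⟨s, hs⟩ := hu.exists_proj_sub_eq_smul_gradient hπ hx
  rw [normalMap_normalCoord hs, hu.eq_zero (hπ.mem x hx)]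

theorem contDiffWithinAt_proj [FiniteDimensional ℝ E] (hu : IsRegularDefiningFunction u F)
    (hπ : IsMetricProjectionOn π F S) (hx : x ∈ S) (hcont : ContinuousWithinAt π S x)
    (hsurj : Function.Surjective (fderiv ℝ (normalMap u) (normalCoord u x (π x)))) :
    ContDiffWithinAt ℝ 1 π S x := by
  set L := fderiv ℝ (normalMap u) (normalCoord u x (π x))
  have hp := hπ.mem x hx
  have hu2 : ContDiffAt ℝ (1 + 1) u (π x) := by simpa [one_add_one_eq_two] using hu.contDiffAt _ hp
  have hmap : ContDiffAt ℝ 1 (normalMap u) (normalCoord u x (π x)) := contDiffAt_normalMap hu2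
  have hcoord : ContinuousWithinAt (fun y ↦ normalCoord u y (π y)) S x :=
    ContinuousAt.comp_continuousWithinAt (f := fun y ↦ (y, π y))
      (contDiffAt_normalCoord hu2 (hu.gradient_ne_zero _ hp)).continuousAt
      (continuousWithinAt_id.prodMk hcont)
  have hcomp : ContDiffWithinAt ℝ 1 (normalMap u ∘ fun y ↦ normalCoord u y (π y)) S x :=
    (contDiffWithinAt_id.prodMk contDiffWithinAt_const).congr
      (fun y hy ↦ hu.normalMap_normalCoord_proj hπ hy) (hu.normalMap_normalCoord_proj hπ hx)
  let e : (E × ℝ) ≃L[ℝ] (E × ℝ) := (LinearEquiv.ofBijective (L : E × ℝ →ₗ[ℝ] E × ℝ)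
    ⟨LinearMap.injective_iff_surjective.2 hsurj, hsurj⟩).toContinuousLinearEquiv
  have he : HasFDerivAt (normalMap u) (e : E × ℝ →L[ℝ] E × ℝ) (normalCoord u x (π x)) :=
    (hmap.differentiableAt one_ne_zero).hasFDerivAt
  exact contDiffAt_fst.comp_contDiffWithinAt x
    (contDiffWithinAt_of_comp one_ne_zero hmap he hcoord hcomp)

theorem mem_range_fderiv_normalMap (hu : IsRegularDefiningFunction u F)
    (hπ : IsMetricProjectionOn π F S) {γ : ℝ → E} {v : E} {T : Set ℝ} {t : ℝ} (ht : t ∈ T)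
    (hT : UniqueDiffWithinAt ℝ T t) (hmaps : MapsTo γ T S) (hγ : HasDerivWithinAt γ v T t)
    (hπγ : DifferentiableWithinAt ℝ (fun s ↦ π (γ s)) T t) :
    (v, (0 : ℝ)) ∈ (fderiv ℝ (normalMap u) (normalCoord u (γ t) (π (γ t)))).range := by
  have hp := hπ.mem _ (hmaps ht)
  have hu2 : ContDiffAt ℝ (1 + 1) u (π (γ t)) := by
    simpa [one_add_one_eq_two] using hu.contDiffAt _ hp
  have hcoord : DifferentiableWithinAt ℝ (fun s ↦ normalCoord u (γ s) (π (γ s))) T t :=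
    DifferentiableAt.comp_differentiableWithinAt t (f := fun s ↦ (γ s, π (γ s)))
      ((contDiffAt_normalCoord hu2 (hu.gradient_ne_zero _ hp)).differentiableAt one_ne_zero)
      (hγ.differentiableWithinAt.prodMk hπγ)
  have hchain := ((contDiffAt_normalMap hu2).differentiableAt
    one_ne_zero).hasFDerivAt.comp_hasDerivWithinAt t hcoord.hasDerivWithinAt
  have hlift : HasDerivWithinAt (normalMap u ∘ fun s ↦ normalCoord u (γ s) (π (γ s))) (v, 0) T t :=
    (hγ.prodMk (hasDerivWithinAt_const t T (0 : ℝ))).congr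
      (fun s hs ↦ hu.normalMap_normalCoord_proj hπ (hmaps hs))
      (hu.normalMap_normalCoord_proj hπ (hmaps ht))
  exact ⟨_, hT.eq_deriv _ hchain hlift⟩

end IsRegularDefiningFunction

end RegularDefiningFunction

section NormalTangential

variable {d : ℕ} {x y p v : Euc d}

theorem norm_sub_smul_nvec (x p : Euc d) : ‖p - x‖ • nvec x p = p - x := by
  rcases eq_or_ne (p - x) 0 with h | h
  · simp [h]
  · rw [nvec, smul_inv_smul₀ (norm_ne_zero_iff.2 h)]

theorem norm_nvec (hne : x ≠ p) : ‖nvec x p‖ = 1 := by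
  rw [nvec, norm_smul, norm_inv, norm_norm]
  exact inv_mul_cancel₀ (by simpa [sub_eq_zero] using hne.symm)

theorem norm_vN (hne : x ≠ p) (v : Euc d) : ‖vN x p v‖ = |⟪v, nvec x p⟫| := by
  rw [vN, norm_smul, norm_nvec hne, mul_one, Real.norm_eq_abs]

theorem nvec_eq_nvec_of_notMem_segment {w : Euc d} {a b : ℝ} (hx : p - x = a • w)
    (hy : p - y = b • w) (hp : p ∉ segment ℝ x y) : nvec x p = nvec y p := by
  have hxp : p - x ≠ 0 := fun h ↦ hp (sub_eq_zero.1 h ▸ left_mem_segment ℝ x y)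
  have hyp : p - y ≠ 0 := fun h ↦ hp (sub_eq_zero.1 h ▸ right_mem_segment ℝ x y)
  have hdep : ¬LinearIndependent ℝ ![p - x, p - y] := fun h ↦ by
    have := (LinearIndependent.pair_iff.1 h b (-a) (by rw [hx, hy]; module)).1
    exact hyp (by rw [hy, this, zero_smul])
  refine (sameRay_iff_inv_norm_smul_eq_of_ne hxp hyp).1
    ((sameRay_or_sameRay_neg_iff_not_linearIndependent.2 hdep).resolve_right ?_)
  rwa [neg_sub, ← mem_segment_iff_sameRay]

theorem vT_smul (c : ℝ) : vT x p (c • v) = c • vT x p v := by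
  simp only [vT, vN, real_inner_smul_left, mul_smul, smul_sub]

theorem vT_smul_nvec (hne : x ≠ p) (c : ℝ) : vT x p (c • nvec x p) = 0 := by
  rw [vT, vN, real_inner_smul_left, real_inner_self_eq_norm_sq, norm_nvec hne, one_pow, mul_one,
    sub_self]

theorem vT_smul_add_sub (hne : x ≠ p) (horth : ⟪p - x, v⟫ = 0) (c : ℝ) :
    vT x p (c • (v + (p - x))) = c • v := by
  have hnorm : ‖p - x‖ ≠ 0 := by simpa [sub_eq_zero] using hne.symm
  simp only [vT, vN, nvec, real_inner_smul_left, real_inner_smul_right, inner_add_left,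
    real_inner_comm (p - x) v, horth, real_inner_self_eq_norm_sq, smul_smul]
  match_scalars <;> field_simp <;> ring

end NormalTangential

section InnerTube

variable {d : ℕ} {D : Set (Euc d)} {ε : ℝ} {π : Euc d → Euc d} {x p v : Euc d}

theorem IsC2BoundedDomain.isCompact_frontier (hD : IsC2BoundedDomain D) :
    IsCompact (frontier D) :=
  isCompact_of_isClosed_isBounded isClosed_frontier
    (hD.2.2.1.closure.subset frontier_subset_closure)

theorem IsC2BoundedDomain.exists_isRegularDefiningFunction (hD : IsC2BoundedDomain D) :
    ∃ u, IsRegularDefiningFunction u (frontier D) := by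
  obtain ⟨-, -, -, U, u, hU, hFU, hu, -, hF, hne⟩ := hD
  refine ⟨u, fun p hp ↦ hu.contDiffAt (hU.mem_nhds (hFU hp)), fun p hp ↦ ?_, fun p hp ↦ ?_⟩
  · simpa [gradient] using hne p hp
  · filter_upwards [hU.mem_nhds (hFU hp)] with q hq
    rw [hF]
    exact and_iff_right hq

/-- The set `N = closure (N_ε(∂D)) ∩ D`. -/
def innerTube {d : ℕ} (D : Set (Euc d)) (ε : ℝ) : Set (Euc d) :=
  {x | x ∈ D ∧ infDist x (frontier D) ≤ ε}

theorem ne_of_mem_of_mem_frontier (hD : IsOpen D) (hx : x ∈ D) (hp : p ∈ frontier D) : x ≠ p :=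
  (disjoint_frontier_iff_isOpen.2 hD).symm.ne_of_mem hx hp

/-- The comparison `½‖γ̇_T‖ ≤ ‖(π∘γ)'‖ ≤ 2‖γ̇_T‖` along every `C¹` curve in the inner tube. As
`derivWithin` vanishes where there is no derivative, the lower bound includes the
differentiability of `π ∘ γ` wherever `γ̇_T ≠ 0`. -/
def TangentialComparison {d : ℕ} (D : Set (Euc d)) (ε : ℝ) (π : Euc d → Euc d) : Prop :=
  ∀ γ : ℝ → Euc d, ContDiffOn ℝ 1 γ (Icc 0 1) → (∀ t ∈ Icc (0 : ℝ) 1, γ t ∈ innerTube D ε) →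
    ∀ t ∈ Icc (0 : ℝ) 1,
      (1 / 2) * ‖vT (γ t) (π (γ t)) (derivWithin γ (Icc 0 1) t)‖ ≤
        ‖derivWithin (fun s ↦ π (γ s)) (Icc 0 1) t‖ ∧
      ‖derivWithin (fun s ↦ π (γ s)) (Icc 0 1) t‖ ≤
        2 * ‖vT (γ t) (π (γ t)) (derivWithin γ (Icc 0 1) t)‖

theorem eventually_add_smul_mem_innerTube (hD : IsOpen D) (hx : x ∈ innerTube D ε)
    (hp : p ∈ frontier D) (hdist : dist x p = infDist x (frontier D)) (horth : ⟪p - x, v⟫ = 0) :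
    ∀ᶠ r in 𝓝[≥] (0 : ℝ), x + r • (v + (p - x)) ∈ innerTube D ε := by
  have hcont : ContinuousAt (fun r : ℝ ↦ x + r • (v + (p - x))) 0 := by fun_prop
  have hmem : ∀ᶠ r in 𝓝 (0 : ℝ), x + r • (v + (p - x)) ∈ D :=
    hcont.eventually_mem (hD.mem_nhds (by simpa using hx.1))
  filter_upwards [nhdsWithin_le_nhds hmem,
    eventually_dist_add_smul_le (ne_of_mem_of_mem_frontier hD hx.1 hp) horth] with r hr hle
  exact ⟨hr, (infDist_le_dist_of_mem hp).trans ((hle.trans_eq hdist).trans hx.2)⟩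

namespace TangentialComparison

variable {u : Euc d → ℝ}

/-- For `v ≠ 0` the curve `t ↦ x + t • c • (v + (π x - x))` has tangential velocity `c • v ≠ 0` at
`t = 0`, so the comparison makes `π` differentiable along it; its normal part keeps it in the
tube. -/
theorem mem_range_fderiv_normalMap (hcomp : TangentialComparison D ε π)
    (hD : IsOpen D) (hu : IsRegularDefiningFunction u (frontier D))
    (hπ : IsMetricProjectionOn π (frontier D) (innerTube D ε)) (hx : x ∈ innerTube D ε)
    (horth : ⟪∇ u (π x), v⟫ = 0) :
    (v, (0 : ℝ)) ∈ (fderiv ℝ (normalMap u) (normalCoord u x (π x))).range := by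
  rcases eq_or_ne v 0 with rfl | hv
  · exact zero_mem _
  have hp := hπ.mem x hx
  obtain ⟨s, hs⟩ := hu.exists_proj_sub_eq_smul_gradient hπ hx
  have horth' : ⟪π x - x, v⟫ = 0 := by rw [hs, real_inner_smul_left, horth, mul_zero]
  set w := v + (π x - x)
  obtain ⟨c, hc : 0 < c, htube⟩ := mem_nhdsGE_iff_exists_Icc_subset.1
    (eventually_add_smul_mem_innerTube hD hx hp (hπ.dist_eq x hx) horth')
  let γ : ℝ → Euc d := fun t ↦ x + t • c • w
  have hγ0 : γ 0 = x := by simp [γ]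
  have hγ : ∀ t, HasDerivAt γ (c • w) t := fun t ↦ by
    simpa [γ] using ((hasDerivAt_id t).smul_const (c • w)).const_add x
  have hγtube : MapsTo γ (Icc 0 1) (innerTube D ε) := fun t ht ↦ by
    have htc : t * c ∈ Icc 0 c := ⟨mul_nonneg ht.1 hc.le, mul_le_of_le_one_left hc.le ht.2⟩
    simpa only [γ, smul_smul] using mem_ofPred.1 (htube htc)
  have h0 : (0 : ℝ) ∈ Icc 0 1 := by simp
  have hunique : UniqueDiffWithinAt ℝ (Icc (0 : ℝ) 1) 0 := uniqueDiffOn_Icc_zero_one 0 h0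
  have hπγ : DifferentiableWithinAt ℝ (fun t ↦ π (γ t)) (Icc 0 1) 0 := by
    have lower := (hcomp γ (by fun_prop) hγtube 0 h0).1
    rw [(hγ 0).hasDerivWithinAt.derivWithin hunique, hγ0,
      vT_smul_add_sub (ne_of_mem_of_mem_frontier hD hx.1 hp) horth'] at lower
    refine differentiableWithinAt_of_derivWithin_ne_zero (norm_pos_iff.1 (lower.trans_lt' ?_))
    have : c • v ≠ 0 := smul_ne_zero hc.ne' hv
    positivity
  have hrange := hu.mem_range_fderiv_normalMap hπ h0 hunique hγtube (hγ 0).hasDerivWithinAt hπγ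
  rw [hγ0] at hrange
  have hnormal := gradient_mem_range_fderiv_normalMap (z := normalCoord u x (π x))
    (hu.contDiffAt _ hp)
  have hsplit : (v, (0 : ℝ)) = c⁻¹ • (c • w, (0 : ℝ)) - s • (∇ u (π x), (0 : ℝ)) := by
    simp [w, ← hs, hc.ne']
  rw [hsplit]
  exact sub_mem (Submodule.smul_mem _ _ hrange) (Submodule.smul_mem _ _ hnormal)

theorem contDiffOn_proj (hcomp : TangentialComparison D ε π) (hD : IsC2BoundedDomain D)
    (hπ : IsMetricProjectionOn π (frontier D) (innerTube D ε)) :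
    ContDiffOn ℝ 1 π (innerTube D ε) := by
  obtain ⟨u, hu⟩ := hD.exists_isRegularDefiningFunction
  intro x hx
  have hp := hπ.mem x hx
  exact hu.contDiffWithinAt_proj hπ hx (hπ.continuousOn hD.isCompact_frontier x hx)
    (surjective_fderiv_normalMap_of_tangent (hu.contDiffAt _ hp) (hu.gradient_ne_zero _ hp)
      fun v ↦ hcomp.mem_range_fderiv_normalMap hD.1 hu hπ hx)

end TangentialComparison

theorem TangentialComparison.norm_deriv_proj_le (hcomp : TangentialComparison D ε π)
    (hπ : ContDiffOn ℝ 1 π (innerTube D ε)) {γ : ℝ → Euc d} {a b t : ℝ}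
    (hγ : ContDiffOn ℝ 1 γ (Icc a b)) (hmaps : MapsTo γ (Icc a b) (innerTube D ε))
    (ht : t ∈ Ioo a b) :
    ‖deriv (fun s ↦ π (γ s)) t‖ ≤ 2 * ‖vT (γ t) (π (γ t)) (deriv γ t)‖ := by
  have hab : a < b := ht.1.trans ht.2
  let θ : ℝ → ℝ := AffineMap.lineMap a b
  have hθ : MapsTo θ (Icc 0 1) (Icc a b) := fun s hs ↦ by
    rw [← segment_eq_Icc hab.le, segment_eq_image_lineMap]
    exact mem_image_of_mem _ hs
  have hθC : ContDiff ℝ 1 θ := by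
    simp only [θ]
    fun_prop
  obtain ⟨τ, hτ, rfl⟩ : ∃ τ ∈ Ioo (0 : ℝ) 1, θ τ = t := by
    rwa [← openSegment_eq_Ioo hab, openSegment_eq_image_lineMap] at ht
  have derivWithin_comp : ∀ f : ℝ → Euc d, ContDiffOn ℝ 1 f (Icc a b) →
      derivWithin (fun s ↦ f (θ s)) (Icc 0 1) τ = (b - a) • deriv f (θ τ) := fun f hf ↦ by
    have hf' : HasDerivAt f (deriv f (θ τ)) (θ τ) :=
      ((hf.contDiffAt (Icc_mem_nhds ht.1 ht.2)).differentiableAt one_ne_zero).hasDerivAt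
    rw [derivWithin_of_mem_nhds (Icc_mem_nhds hτ.1 hτ.2)]
    exact (hf'.scomp τ AffineMap.hasDerivAt_lineMap).deriv
  have upper := (hcomp (fun s ↦ γ (θ s)) (hγ.comp hθC.contDiffOn hθ)
    (fun s hs ↦ hmaps (hθ hs)) τ (Ioo_subset_Icc_self hτ)).2
  rw [derivWithin_comp γ hγ, derivWithin_comp (fun s ↦ π (γ s)) (hπ.comp hγ hmaps), vT_smul,
    norm_smul, norm_smul, mul_left_comm] at upper
  exact le_of_mul_le_mul_left upper (norm_pos_iff.2 (sub_pos.2 hab).ne')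

section PiecewiseC1

variable {γ : ℝ → Euc d} {α β : ℝ} {S : Set (Euc d)}

theorem piecewiseC1On_of_contDiffOn (hαβ : α ≤ β) (hγ : ContDiffOn ℝ 1 γ (Icc α β)) :
    PiecewiseC1On γ α β :=
  ⟨hγ.continuousOn, 0, ![α, β], by simpa [Monotone, Fin.forall_fin_two], rfl, rfl,
    fun i ↦ by fin_cases i; exact hγ⟩

namespace PiecewiseC1On

theorem exists_partition (h : PiecewiseC1On γ α β) :
    ∃ (n : ℕ) (a : ℕ → ℝ), Monotone a ∧ a 0 = α ∧ a n = β ∧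
      ∀ k < n, ContDiffOn ℝ 1 γ (Icc (a k) (a (k + 1))) := by
  obtain ⟨-, n, t, ht, h0, h1, hC⟩ := h
  refine ⟨n + 1, fun k ↦ t ⟨min k (n + 1), by omega⟩, fun i j hij ↦ ht ?_, ?_, ?_, fun k hk ↦ ?_⟩
  · simp only [Fin.mk_le_mk]
    omega
  · simpa using h0
  · simpa [Fin.last] using h1
  · simpa [Fin.castSucc, Fin.succ, hk.le, Nat.succ_le_of_lt hk] using hC ⟨k, hk⟩

theorem exists_finite_forall_mem_Ioo (h : PiecewiseC1On γ α β) :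
    ∃ B : Set ℝ, B.Finite ∧ ∀ t ∈ Icc α β \ B, ∃ a b, t ∈ Ioo a b ∧
      Icc a b ⊆ Icc α β ∧ ContDiffOn ℝ 1 γ (Icc a b) := by
  obtain ⟨n, a, ha, rfl, rfl, hC⟩ := h.exists_partition
  refine ⟨a '' Iic n, (finite_Iic n).image a, fun t ⟨ht, htB⟩ ↦ ?_⟩
  have hne : ∀ k ≤ n, a k ≠ t := fun k hk hkt ↦ htB ⟨k, hk, hkt⟩
  have hmem : t ∈ Ioc (a 0) (a n) := ⟨ht.1.lt_of_ne (hne 0 n.zero_le), ht.2⟩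
  rw [← ha.biUnion_Ico_Ioc_map_succ] at hmem
  obtain ⟨k, hk, htk⟩ := mem_iUnion₂.1 hmem
  exact ⟨a k, a (k + 1), ⟨htk.1, htk.2.lt_of_ne (hne (k + 1) hk.2).symm⟩,
    Icc_subset_Icc (ha k.zero_le) (ha hk.2), hC k hk.2⟩

theorem comp_contDiffOn {f : Euc d → Euc d} (h : PiecewiseC1On γ α β) (hf : ContDiffOn ℝ 1 f S)
    (hmaps : MapsTo γ (Icc α β) S) : PiecewiseC1On (fun t ↦ f (γ t)) α β := by
  obtain ⟨hc, n, t, ht, rfl, rfl, hC⟩ := h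
  exact ⟨hf.continuousOn.comp hc hmaps, n, t, ht, rfl, rfl, fun i ↦ hf.comp (hC i)
    (hmaps.mono_left (Icc_subset_Icc (ht (Fin.zero_le _)) (ht (Fin.le_last _))))⟩

theorem intervalIntegrable {Φ : Euc d → Euc d → ℝ} (h : PiecewiseC1On γ α β)
    (hmaps : MapsTo γ (Icc α β) S)
    (hΦ : ContinuousOn (fun z : Euc d × Euc d ↦ Φ z.1 z.2) (S ×ˢ univ)) :
    IntervalIntegrable (fun t ↦ Φ (γ t) (deriv γ t)) MeasureTheory.volume α β := by
  obtain ⟨n, a, ha, rfl, rfl, hC⟩ := h.exists_partition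
  refine .trans_iterate fun k hk ↦ ?_
  rcases (ha k.le_succ).eq_or_lt with heq | hlt
  · exact heq ▸ .refl
  have hsub : Icc (a k) (a (k + 1)) ⊆ Icc (a 0) (a n) := Icc_subset_Icc (ha k.zero_le) (ha hk)
  have hcont : ContinuousOn (fun t ↦ Φ (γ t) (derivWithin γ (Icc (a k) (a (k + 1))) t))
      (Icc (a k) (a (k + 1))) :=
    hΦ.comp ((hC k hk).continuousOn.prodMk
      ((hC k hk).continuousOn_derivWithin (uniqueDiffOn_Icc hlt) le_rfl))
      fun t ht ↦ ⟨hmaps (hsub ht), mem_univ _⟩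
  refine (hcont.intervalIntegrable_of_Icc hlt.le).congr_uIoo fun t ht ↦ ?_
  rw [uIoo_of_le hlt.le] at ht
  simp only [derivWithin_of_mem_nhds (Icc_mem_nhds ht.1 ht.2)]

end PiecewiseC1On

theorem bdist_le_integral_norm_deriv {α : ℝ → Euc d} (hα : PiecewiseC1On α 0 1)
    (hmem : ∀ t ∈ Icc (0 : ℝ) 1, α t ∈ frontier D) :
    bdist D (α 0) (α 1) ≤ ∫ t in (0 : ℝ)..1, ‖deriv α t‖ := by
  refine csInf_le ⟨0, ?_⟩ ⟨α, hα, hmem, rfl, rfl, rfl⟩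
  rintro L ⟨β, -, -, -, -, rfl⟩
  exact intervalIntegral.integral_nonneg zero_le_one fun t _ ↦ norm_nonneg _

end PiecewiseC1

section LengthEstimate

variable {γ : ℝ → Euc d}

theorem continuousOn_nvec_proj (hD : IsOpen D)
    (hπ : IsMetricProjectionOn π (frontier D) (innerTube D ε))
    (hc : ContinuousOn π (innerTube D ε)) :
    ContinuousOn (fun x ↦ nvec x (π x)) (innerTube D ε) :=
  ((hc.sub continuousOn_id).norm.inv₀ fun x hx ↦ by
    simpa [sub_eq_zero] using (ne_of_mem_of_mem_frontier hD hx.1 (hπ.mem x hx)).symm).smul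
    (hc.sub continuousOn_id)

theorem infDist_frontier_pos (hD : IsOpen D)
    (hπ : IsMetricProjectionOn π (frontier D) (innerTube D ε)) (hx : x ∈ innerTube D ε) :
    0 < infDist x (frontier D) := by
  rw [← hπ.dist_eq x hx]
  exact dist_pos.2 (ne_of_mem_of_mem_frontier hD hx.1 (hπ.mem x hx))

/-- The differential of `log h` at `x`, evaluated at `v`; the outer normal points towards the
boundary, whence the sign. -/
def dlogh {d : ℕ} (D : Set (Euc d)) (π : Euc d → Euc d) (x v : Euc d) : ℝ :=
  -⟪v, nvec x (π x)⟫ / (2 * infDist x (frontier D))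

theorem abs_dlogh (hne : x ≠ π x) (v : Euc d) :
    |dlogh D π x v| = ‖vN x (π x) v‖ / (2 * infDist x (frontier D)) := by
  rw [dlogh, abs_div, abs_neg, norm_vN hne, abs_of_nonneg (mul_nonneg zero_le_two infDist_nonneg)]

theorem hasDerivAt_log_hfun (hD : IsOpen D)
    (hπ : IsMetricProjectionOn π (frontier D) (innerTube D ε))
    (hc : ContinuousOn π (innerTube D ε)) {t : ℝ} (hγ : HasDerivAt γ v t)
    (hmem : ∀ᶠ s in 𝓝 t, γ s ∈ innerTube D ε) :
    HasDerivAt (fun s ↦ Real.log (hfun D (γ s))) (dlogh D π (γ t) v) t := by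
  have ht := hmem.self_of_nhds
  have hpos := infDist_frontier_pos hD hπ ht
  have hsq : HasDerivAt (fun s ↦ infDist (γ s) (frontier D) ^ 2) (2 * ⟪γ t - π (γ t), v⟫) t := by
    have := (hπ.hasFDerivWithinAt_infDist_sq ht (hc _ ht)).comp_hasDerivAt t hγ hmem
    simpa [inner_sub_left] using! this
  have hlog : (fun s ↦ Real.log (hfun D (γ s))) =
      fun s ↦ Real.log (infDist (γ s) (frontier D) ^ 2) / 4 := by
    ext s
    rw [hfun, Real.log_sqrt infDist_nonneg, Real.log_pow]
    ring
  rw [hlog]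
  refine ((hsq.log (by positivity)).div_const 4).congr_deriv ?_
  rw [dlogh, nvec, ← dist_eq_norm', hπ.dist_eq _ ht, real_inner_smul_right, real_inner_comm,
    ← neg_sub (π (γ t)), inner_neg_right]
  field_simp
  ring

theorem intervalIntegrable_dlogh (hD : IsOpen D)
    (hπ : IsMetricProjectionOn π (frontier D) (innerTube D ε))
    (hc : ContinuousOn π (innerTube D ε)) (hγ : PiecewiseC1On γ 0 1)
    (hmaps : MapsTo γ (Icc 0 1) (innerTube D ε)) :
    IntervalIntegrable (fun t ↦ dlogh D π (γ t) (deriv γ t)) MeasureTheory.volume 0 1 := by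
  refine hγ.intervalIntegrable hmaps (ContinuousOn.div ?_ (by fun_prop) fun z hz ↦ ?_)
  · exact (continuousOn_snd.inner ((continuousOn_nvec_proj hD hπ hc).comp continuousOn_fst
      fun z hz ↦ hz.1)).neg
  · have := infDist_frontier_pos hD hπ hz.1
    positivity

theorem intervalIntegrable_norm_vT_div (hD : IsOpen D)
    (hπ : IsMetricProjectionOn π (frontier D) (innerTube D ε))
    (hc : ContinuousOn π (innerTube D ε)) (hγ : PiecewiseC1On γ 0 1)
    (hmaps : MapsTo γ (Icc 0 1) (innerTube D ε)) :
    IntervalIntegrable (fun t ↦ ‖vT (γ t) (π (γ t)) (deriv γ t)‖ / √(infDist (γ t) (frontier D)))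
      MeasureTheory.volume 0 1 := by
  have hν : ContinuousOn (fun z : Euc d × Euc d ↦ nvec z.1 (π z.1)) (innerTube D ε ×ˢ univ) :=
    (continuousOn_nvec_proj hD hπ hc).comp continuousOn_fst fun z hz ↦ hz.1
  have hvN : ContinuousOn (fun z : Euc d × Euc d ↦ vN z.1 (π z.1) z.2) (innerTube D ε ×ˢ univ) :=
    ContinuousOn.smul (continuousOn_snd.inner (𝕜 := ℝ) hν) hν
  have hvT : ContinuousOn (fun z : Euc d × Euc d ↦ vT z.1 (π z.1) z.2) (innerTube D ε ×ˢ univ) :=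
    continuousOn_snd.sub hvN
  exact hγ.intervalIntegrable hmaps (Φ := fun x v ↦ ‖vT x (π x) v‖ / √(infDist x (frontier D)))
    (hvT.norm.div (by fun_prop) fun z hz ↦ (Real.sqrt_pos.2 (infDist_frontier_pos hD hπ hz.1)).ne')

theorem integral_dlogh (hD : IsOpen D)
    (hπ : IsMetricProjectionOn π (frontier D) (innerTube D ε))
    (hc : ContinuousOn π (innerTube D ε)) (hγ : PiecewiseC1On γ 0 1)
    (hmaps : MapsTo γ (Icc 0 1) (innerTube D ε)) :
    ∫ t in (0 : ℝ)..1, dlogh D π (γ t) (deriv γ t) = Real.log (hfun D (γ 1) / hfun D (γ 0)) := by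
  have hpos : ∀ t ∈ Icc (0 : ℝ) 1, hfun D (γ t) ≠ 0 := fun t ht ↦
    (Real.sqrt_pos.2 (infDist_frontier_pos hD hπ (hmaps ht))).ne'
  obtain ⟨B, hB, hpiece⟩ := hγ.exists_finite_forall_mem_Ioo
  have hcont : ContinuousOn (fun t ↦ Real.log (hfun D (γ t))) (Icc 0 1) :=
    ((continuous_infDist_pt _).comp_continuousOn hγ.1).sqrt.log hpos
  have hderiv : ∀ t ∈ Ioo (0 : ℝ) 1 \ B,
      HasDerivAt (fun s ↦ Real.log (hfun D (γ s))) (dlogh D π (γ t) (deriv γ t)) t := by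
    rintro t ⟨ht, htB⟩
    obtain ⟨a, b, hab, -, hC⟩ := hpiece t ⟨Ioo_subset_Icc_self ht, htB⟩
    exact hasDerivAt_log_hfun hD hπ hc
      ((hC.contDiffAt (Icc_mem_nhds hab.1 hab.2)).differentiableAt one_ne_zero).hasDerivAt
      (Filter.mem_of_superset (Icc_mem_nhds ht.1 ht.2) fun s hs ↦ hmaps hs)
  rw [Real.log_div (hpos 1 (by simp)) (hpos 0 (by simp))]
  exact MeasureTheory.integral_eq_of_hasDerivAt_off_countable_of_le _ _ zero_le_one hB.countable
    hcont hderiv (intervalIntegrable_dlogh hD hπ hc hγ hmaps)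

theorem abs_log_hfun_div_le (hD : IsOpen D)
    (hπ : IsMetricProjectionOn π (frontier D) (innerTube D ε))
    (hc : ContinuousOn π (innerTube D ε)) (hγ : PiecewiseC1On γ 0 1)
    (hmaps : MapsTo γ (Icc 0 1) (innerTube D ε)) :
    |Real.log (hfun D (γ 1) / hfun D (γ 0))| ≤
      ∫ t in (0 : ℝ)..1, |dlogh D π (γ t) (deriv γ t)| := by
  rw [← integral_dlogh hD hπ hc hγ hmaps]
  exact intervalIntegral.abs_integral_le_integral_abs zero_le_one

theorem TangentialComparison.bdist_div_le (hcomp : TangentialComparison D ε π) (hD : IsOpen D)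
    (hπ : IsMetricProjectionOn π (frontier D) (innerTube D ε))
    (hπC : ContDiffOn ℝ 1 π (innerTube D ε)) (hγ : PiecewiseC1On γ 0 1)
    (hmaps : MapsTo γ (Icc 0 1) (innerTube D ε)) :
    bdist D (π (γ 0)) (π (γ 1)) / (2 * sSup ((fun t ↦ hfun D (γ t)) '' Icc (0 : ℝ) 1)) ≤
      ∫ t in (0 : ℝ)..1, ‖vT (γ t) (π (γ t)) (deriv γ t)‖ / √(infDist (γ t) (frontier D)) := by
  set M := sSup ((fun t ↦ hfun D (γ t)) '' Icc (0 : ℝ) 1)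
  have hpos : ∀ t ∈ Icc (0 : ℝ) 1, 0 < hfun D (γ t) := fun t ht ↦
    Real.sqrt_pos.2 (infDist_frontier_pos hD hπ (hmaps ht))
  have hle : ∀ t ∈ Icc (0 : ℝ) 1, hfun D (γ t) ≤ M := fun t ht ↦
    le_csSup (isCompact_Icc.image_of_continuousOn
      ((continuous_infDist_pt _).comp_continuousOn hγ.1).sqrt).bddAbove (mem_image_of_mem _ ht)
  have hM : 0 < M := (hpos 0 (by simp)).trans_le (hle 0 (by simp))
  have hπγ : PiecewiseC1On (fun t ↦ π (γ t)) 0 1 := hγ.comp_contDiffOn hπC hmaps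
  obtain ⟨B, hB, hpiece⟩ := hγ.exists_finite_forall_mem_Ioo
  have speed_le : ∀ t ∈ Icc (0 : ℝ) 1 \ B, ‖deriv (fun s ↦ π (γ s)) t‖ ≤
      ‖vT (γ t) (π (γ t)) (deriv γ t)‖ / √(infDist (γ t) (frontier D)) * (2 * M) := by
    rintro t ht
    obtain ⟨a, b, hab, hsub, hC⟩ := hpiece t ht
    calc ‖deriv (fun s ↦ π (γ s)) t‖ ≤ 2 * ‖vT (γ t) (π (γ t)) (deriv γ t)‖ :=
          hcomp.norm_deriv_proj_le hπC hC (hmaps.mono_left hsub) hab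
      _ = ‖vT (γ t) (π (γ t)) (deriv γ t)‖ / hfun D (γ t) * (2 * hfun D (γ t)) := by
          field_simp [(hpos t ht.1).ne']
      _ ≤ ‖vT (γ t) (π (γ t)) (deriv γ t)‖ / hfun D (γ t) * (2 * M) := by
          have := hpos t ht.1
          gcongr
          exact hle t ht.1
  rw [div_le_iff₀ (by positivity), ← intervalIntegral.integral_mul_const]
  refine (bdist_le_integral_norm_deriv hπγ fun t ht ↦ hπ.mem _ (hmaps ht)).trans
    (intervalIntegral.integral_mono_ae_restrict zero_le_one ?_
      ((intervalIntegrable_norm_vT_div hD hπ hπC.continuousOn hγ hmaps).mul_const _) ?_)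
  · exact hπγ.intervalIntegrable (mapsTo_univ _ _) (Φ := fun _ v ↦ ‖v‖) (by fun_prop)
  · filter_upwards [MeasureTheory.ae_restrict_of_ae (hB.countable.ae_notMem _),
      MeasureTheory.ae_restrict_mem measurableSet_Icc] with t htB ht using speed_le t ⟨ht, htB⟩

theorem Flen_eq_integral_add (hD : IsOpen D)
    (hπ : IsMetricProjectionOn π (frontier D) (innerTube D ε))
    (hc : ContinuousOn π (innerTube D ε)) (hγ : PiecewiseC1On γ 0 1)
    (hmaps : MapsTo γ (Icc 0 1) (innerTube D ε)) :
    Flen D π γ = (∫ t in (0 : ℝ)..1, |dlogh D π (γ t) (deriv γ t)|) +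
      ∫ t in (0 : ℝ)..1, ‖vT (γ t) (π (γ t)) (deriv γ t)‖ / √(infDist (γ t) (frontier D)) := by
  rw [← intervalIntegral.integral_add (intervalIntegrable_dlogh hD hπ hc hγ hmaps).abs
    (intervalIntegrable_norm_vT_div hD hπ hc hγ hmaps)]
  refine intervalIntegral.integral_congr fun t ht ↦ ?_
  have hx := hmaps (uIcc_of_le (zero_le_one' ℝ) ▸ ht)
  simp only [abs_dlogh (ne_of_mem_of_mem_frontier hD hx.1 (hπ.mem _ hx))]

end LengthEstimate

section Fiber

theorem segment_subset_innerTube {y : Euc d}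
    (hπ : IsMetricProjectionOn π (frontier D) (innerTube D ε)) (hx : x ∈ innerTube D ε)
    (hy : y ∈ innerTube D ε) (hfiber : ∀ z ∈ segment ℝ x y, z ∈ D ∧ π z = p) :
    segment ℝ x y ⊆ innerTube D ε := by
  have mem_closedBall : ∀ z ∈ segment ℝ x y, z ∈ innerTube D ε → z ∈ closedBall p ε :=
    fun z hz hzN ↦ by
      rw [Metric.mem_closedBall, ← (hfiber z hz).2, hπ.dist_eq z hzN]
      exact hzN.2
  have hp : p ∈ frontier D := (hfiber x (left_mem_segment ℝ x y)).2 ▸ hπ.mem x hx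
  intro z hz
  refine ⟨(hfiber z hz).1, (infDist_le_dist_of_mem hp).trans ?_⟩
  exact (convex_closedBall p ε).segment_subset (mem_closedBall x (left_mem_segment ℝ x y) hx)
    (mem_closedBall y (right_mem_segment ℝ x y) hy) hz

theorem nvec_eq_of_fiber (hD : IsC2BoundedDomain D)
    (hπ : IsMetricProjectionOn π (frontier D) (innerTube D ε)) {y z : Euc d}
    (htube : segment ℝ x y ⊆ innerTube D ε) (hfiber : ∀ w ∈ segment ℝ x y, π w = p)
    (hz : z ∈ segment ℝ x y) : nvec z p = nvec x p := by
  obtain ⟨u, hu⟩ := hD.exists_isRegularDefiningFunction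
  have on_normal_line : ∀ w ∈ segment ℝ x y, ∃ s : ℝ, p - w = s • ∇ u p := fun w hw ↦ by
    simpa only [hfiber w hw] using hu.exists_proj_sub_eq_smul_gradient hπ (htube hw)
  have hx := left_mem_segment ℝ x y
  have hp : p ∈ frontier D := hfiber x hx ▸ hπ.mem x (htube hx)
  obtain ⟨a, ha⟩ := on_normal_line z hz
  obtain ⟨b, hb⟩ := on_normal_line x hx
  refine nvec_eq_nvec_of_notMem_segment ha hb fun hpzx ↦ ?_
  have hpD := (htube ((convex_segment x y).segment_subset hz hx hpzx)).1
  exact ne_of_mem_of_mem_frontier hD.1 hpD hp rfl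

theorem vT_sub_eq_zero_of_fiber (hD : IsC2BoundedDomain D)
    (hπ : IsMetricProjectionOn π (frontier D) (innerTube D ε)) {y z : Euc d}
    (htube : segment ℝ x y ⊆ innerTube D ε) (hfiber : ∀ w ∈ segment ℝ x y, π w = p)
    (hz : z ∈ segment ℝ x y) : vT z p (y - x) = 0 := by
  have hp : p ∈ frontier D := hfiber z hz ▸ hπ.mem z (htube hz)
  have direction : y - x = (‖p - x‖ - ‖p - y‖) • nvec x p := by
    rw [sub_smul, norm_sub_smul_nvec,
      ← nvec_eq_of_fiber hD hπ htube hfiber (right_mem_segment ℝ x y), norm_sub_smul_nvec,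
      sub_sub_sub_cancel_left]
  rw [direction, ← nvec_eq_of_fiber hD hπ htube hfiber hz]
  exact vT_smul_nvec (ne_of_mem_of_mem_frontier hD.1 (htube hz).1 hp) _

theorem Flen_eq_abs_log_of_vT_eq_zero {γ : ℝ → Euc d} (hD : IsOpen D)
    (hπ : IsMetricProjectionOn π (frontier D) (innerTube D ε))
    (hc : ContinuousOn π (innerTube D ε)) (hγ : PiecewiseC1On γ 0 1)
    (hmaps : MapsTo γ (Icc 0 1) (innerTube D ε))
    (hT : ∀ t ∈ Icc (0 : ℝ) 1, vT (γ t) (π (γ t)) (deriv γ t) = 0)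
    (hsign : (∀ t ∈ Icc (0 : ℝ) 1, 0 ≤ dlogh D π (γ t) (deriv γ t)) ∨
      ∀ t ∈ Icc (0 : ℝ) 1, dlogh D π (γ t) (deriv γ t) ≤ 0) :
    Flen D π γ = |Real.log (hfun D (γ 1) / hfun D (γ 0))| := by
  have tangential_eq_zero : ∫ t in (0 : ℝ)..1,
      ‖vT (γ t) (π (γ t)) (deriv γ t)‖ / √(infDist (γ t) (frontier D)) = 0 := by
    refine (intervalIntegral.integral_congr fun t ht ↦ ?_).trans intervalIntegral.integral_zero
    simp only [hT t (uIcc_of_le (zero_le_one' ℝ) ▸ ht), norm_zero, zero_div]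
  rw [Flen_eq_integral_add hD hπ hc hγ hmaps, tangential_eq_zero, add_zero,
    ← integral_dlogh hD hπ hc hγ hmaps]
  rcases hsign with hnonneg | hnonpos
  · rw [abs_of_nonneg (intervalIntegral.integral_nonneg zero_le_one hnonneg)]
    exact intervalIntegral.integral_congr fun t ht ↦
      abs_of_nonneg (hnonneg t (uIcc_of_le (zero_le_one' ℝ) ▸ ht))
  · rw [← abs_neg, ← intervalIntegral.integral_neg, abs_of_nonneg
      (intervalIntegral.integral_nonneg zero_le_one fun t ht ↦ neg_nonneg.2 (hnonpos t ht))]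
    exact intervalIntegral.integral_congr fun t ht ↦
      abs_of_nonpos (hnonpos t (uIcc_of_le (zero_le_one' ℝ) ▸ ht))

theorem Flen_segment_eq (hD : IsC2BoundedDomain D)
    (hπ : IsMetricProjectionOn π (frontier D) (innerTube D ε)) {y : Euc d}
    (hx : x ∈ innerTube D ε) (hy : y ∈ innerTube D ε)
    (hfiber : ∀ z ∈ segment ℝ x y, z ∈ D ∧ π z = p) :
    Flen D π (fun t ↦ x + t • (y - x)) = |Real.log (hfun D y / hfun D x)| := by
  have htube := segment_subset_innerTube hπ hx hy hfiber
  have hπp : ∀ z ∈ segment ℝ x y, π z = p := fun z hz ↦ (hfiber z hz).2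
  set γ : ℝ → Euc d := fun t ↦ x + t • (y - x)
  have hγseg : ∀ t ∈ Icc (0 : ℝ) 1, γ t ∈ segment ℝ x y := fun t ht ↦ by
    rw [segment_eq_image']
    exact mem_image_of_mem _ ht
  have hγ : PiecewiseC1On γ 0 1 :=
    piecewiseC1On_of_contDiffOn zero_le_one (ContDiff.contDiffOn (by fun_prop))
  have hmaps : MapsTo γ (Icc 0 1) (innerTube D ε) := fun t ht ↦ htube (hγseg t ht)
  have hderiv : ∀ t, deriv γ t = y - x := fun t ↦ by
    simpa [γ] using (((hasDerivAt_id t).smul_const (y - x)).const_add x).deriv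
  have hT : ∀ t ∈ Icc (0 : ℝ) 1, vT (γ t) (π (γ t)) (deriv γ t) = 0 := fun t ht ↦ by
    rw [hderiv, hπp _ (hγseg t ht)]
    exact vT_sub_eq_zero_of_fiber hD hπ htube hπp (hγseg t ht)
  have hdlogh : ∀ t ∈ Icc (0 : ℝ) 1, dlogh D π (γ t) (deriv γ t) =
      -⟪y - x, nvec x p⟫ / (2 * infDist (γ t) (frontier D)) := fun t ht ↦ by
    rw [dlogh, hderiv, hπp _ (hγseg t ht), nvec_eq_of_fiber hD hπ htube hπp (hγseg t ht)]
  have hδ : ∀ t, 0 ≤ 2 * infDist (γ t) (frontier D) := fun t ↦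
    mul_nonneg zero_le_two infDist_nonneg
  have hsign := (le_total 0 (-⟪y - x, nvec x p⟫)).imp
    (fun h t (ht : t ∈ Icc (0 : ℝ) 1) ↦ (div_nonneg h (hδ t)).trans_eq (hdlogh t ht).symm)
    (fun h t (ht : t ∈ Icc (0 : ℝ) 1) ↦
      (hdlogh t ht).trans_le (div_nonpos_of_nonpos_of_nonneg h (hδ t)))
  simpa [γ] using Flen_eq_abs_log_of_vT_eq_zero hD.1 hπ
    (hπ.continuousOn hD.isCompact_frontier) hγ hmaps hT hsign

end Fiber

end InnerTube

/-- Length estimates, with respect to the boundary Finsler metric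
`F(x,v) = ‖v_N‖/(2δ_D(x)) + ‖v_T‖/δ_D(x)^{1/2}`, for piecewise `C¹` curves in
`N = closure(N_ε(∂D)) ∩ D`, where `ε` is small enough that the nearest-point projection
`π` is well defined and the tangential comparison holds. -/
theorem boundary_finsler_length_estimates
    (d : ℕ) (hd : 2 ≤ d) (D : Set (Euc d)) (hD : IsC2BoundedDomain D)
    (ε : ℝ) (hε0 : 0 < ε) (hε1 : ε < 1) (π : Euc d → Euc d)
    (hπ : ∀ x : Euc d, Metric.infDist x (frontier D) ≤ ε →
      π x ∈ frontier D ∧ dist x (π x) = Metric.infDist x (frontier D) ∧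
      ∀ q ∈ frontier D, dist x q = Metric.infDist x (frontier D) → q = π x)
    (hcomp : ∀ γ : ℝ → Euc d, ContDiffOn ℝ 1 γ (Set.Icc 0 1) →
      (∀ t ∈ Set.Icc (0:ℝ) 1, γ t ∈ D ∧ Metric.infDist (γ t) (frontier D) ≤ ε) →
      ∀ t ∈ Set.Icc (0:ℝ) 1,
        (1/2) * ‖vT (γ t) (π (γ t)) (derivWithin γ (Set.Icc 0 1) t)‖ ≤
          ‖derivWithin (fun s => π (γ s)) (Set.Icc 0 1) t‖ ∧
        ‖derivWithin (fun s => π (γ s)) (Set.Icc 0 1) t‖ ≤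
          2 * ‖vT (γ t) (π (γ t)) (derivWithin γ (Set.Icc 0 1) t)‖) :
    (∀ γ : ℝ → Euc d, PiecewiseC1On γ 0 1 →
      (∀ t ∈ Set.Icc (0:ℝ) 1, γ t ∈ D ∧ Metric.infDist (γ t) (frontier D) ≤ ε) →
      |Real.log (hfun D (γ 1) / hfun D (γ 0))|
        + bdist D (π (γ 0)) (π (γ 1)) /
            (2 * sSup ((fun t => hfun D (γ t)) '' Set.Icc (0:ℝ) 1))
        ≤ Flen D π γ) ∧
    (∀ x y : Euc d, x ∈ D → Metric.infDist x (frontier D) ≤ ε →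
      y ∈ D → Metric.infDist y (frontier D) ≤ ε →
      ∀ ξ ∈ frontier D,
        (∀ t ∈ Set.Icc (0:ℝ) 1, x + t • (y - x) ∈ D ∧ π (x + t • (y - x)) = ξ) →
        Flen D π (fun t => x + t • (y - x)) = |Real.log (hfun D y / hfun D x)|) := by
  have hproj : IsMetricProjectionOn π (frontier D) (innerTube D ε) :=
    ⟨fun x hx ↦ (hπ x hx.2).1, fun x hx ↦ (hπ x hx.2).2.1, fun x hx ↦ (hπ x hx.2).2.2⟩
  have hcomp' : TangentialComparison D ε π := hcomp
  have hπC : ContDiffOn ℝ 1 π (innerTube D ε) := hcomp'.contDiffOn_proj hD hproj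
  refine ⟨fun γ hγ hγN ↦ ?_, fun x y hxD hxε hyD hyε ξ _ hfiber ↦ ?_⟩
  · rw [Flen_eq_integral_add hD.1 hproj hπC.continuousOn hγ hγN]
    exact add_le_add (abs_log_hfun_div_le hD.1 hproj hπC.continuousOn hγ hγN)
      (hcomp'.bdist_div_le hD.1 hproj hπC hγ hγN)
  · refine Flen_segment_eq hD hproj ⟨hxD, hxε⟩ ⟨hyD, hyε⟩ (p := ξ) ?_
    rw [segment_eq_image']
    rintro _ ⟨t, ht, rfl⟩
    exact hfiber t ht
end
end
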